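/- arXiv:2105.14508 — 3 statements merged into one kernel-verified Lean document; each statement's English description precedes it below -/
import Mathlib

section
/- Let q > 2 be an even prime power and r ≥ 4 even, and let B be the hypersurface of PG(r,q²) defined below with Tr_{GF(q)/GF(2)}(α^{q+1}/(β^q+β)²) = 0. Then |B| = q^{2r−1}+q^{2(r−2)}+q^{2(r−3)}+⋯+q²+1, and for every hyperplane Σ of PG(r,q²) the cardinality |B ∩ Σ| belongs to the set {n₁, n₂, n₃, n₄, n₅}, where n₁ = (q^{2(r−1)}−1)/(q²−1), n₂ = q^{2r−3}−q^{r−1}+q^{r−2}+(q^{2(r−2)}−1)/(q²−1), n₃ = q^{2r−3}+(q^{2(r−2)}−1)/(q²−1), n₄ = q^{2r−3}+q^{r−2}+(q^{2(r−2)}−1)/(q²−1), and n₅ = q^{2r−3}+(q^{2(r−1)}−1)/(q²−1). -/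
/-- The affine equation
`x_r^q − x_r + α^q(x₁^{2q}+⋯+x_{r−1}^{2q}) − α(x₁²+⋯+x_{r−1}²)
  = (β^q−β)(x₁^{q+1}+⋯+x_{r−1}^{q+1})`. -/
def affEq {F : Type*} [Field F] (q r : ℕ) (α β : F) (x : Fin (r + 1) → F) : Prop :=
  x (Fin.last r) ^ q - x (Fin.last r)
      + α ^ q * (∑ i : Fin (r + 1), if 1 ≤ i.1 ∧ i.1 < r then x i ^ (2 * q) else 0)
      - α * (∑ i : Fin (r + 1), if 1 ≤ i.1 ∧ i.1 < r then x i ^ 2 else 0)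
    = (β ^ q - β) * (∑ i : Fin (r + 1), if 1 ≤ i.1 ∧ i.1 < r then x i ^ (q + 1) else 0)

/-- The hypersurface `B` of `PG(r,q²)`: the affine points (X₀ ≠ 0) whose affine
coordinates satisfy `affEq`, together with the points at infinity (X₀ = 0)
satisfying `X₁² + ⋯ + X_{r−1}² = 0`. -/
noncomputable def Bset (F : Type*) [Field F] (q r : ℕ) (α β : F) :
    Set (Projectivization F (Fin (r + 1) → F)) :=
  {P | (P.rep 0 ≠ 0 ∧ affEq q r α β fun i => P.rep i / P.rep 0) ∨
       (P.rep 0 = 0 ∧ (∑ i : Fin (r + 1), if 1 ≤ i.1 ∧ i.1 < r then P.rep i ^ 2 else 0) = 0)}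

/-!
Write `N x = x ^ (q + 1)` and `Tr x = x ^ q + x` for the relative norm and trace, `⟨z, w⟩` for the
standard Hermitian form in `r - 1` variables, and `b = β ^ q + β`. In characteristic two the affine
equation at `(z, y)` reads `Tr y = Q z` with `Q z = b⟨z, z⟩ + Tr (α (∑ z_i)²)`, so every `z` lies
below exactly `q` points. At infinity `∑ X_i² = (∑ X_i)²`, so the points there form a subspace.

The form `Q` is Hermitian in disguise. With `α = a²` and `v` the constant vector `a ^ q`, one has
`Tr (α (∑ z_i)²) = (Tr ⟨z, v⟩)²`, while the trace transvection `T z = z + c Tr ⟨z, v⟩ v` satisfies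
`⟨T z, T z⟩ = ⟨z, z⟩ + (c²⟨v, v⟩ + c)(Tr ⟨z, v⟩)²` for `c` in `GF(q)`. As `r - 1` is odd,
`⟨v, v⟩ = N a`, and thus `Q = b⟨T ·, T ·⟩` once `c² N a + c = b⁻¹`. If `a ≠ 0`, `c = u / N a`
turns this into the Artin–Schreier equation `u² + u = N a / b`, solvable in `GF(q)` exactly when the
absolute trace of `N a / b`, equivalently that of its square `α ^ (q + 1) / b²`, vanishes.

A hyperplane `y = c₀ + g · z` cuts out `Q z + Tr (g · z) = Tr c₀`. The linear term is absorbed by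
translating `z`, which leaves the number of vectors on which the Hermitian form takes a given value:
it depends only on whether that value is zero, which gives `n₂` and `n₄`. The hyperplanes through
`(0 : … : 0 : 1)` have affine parts that are unions of lines `{z} × F` and yield the remaining
sizes.
-/

open Finset Polynomial
open scoped Matrix LinearAlgebra.Projectivization

section Fibers

theorem card_fiber_eq_of_forall_card_fiber_le {A B : Type*} [Finite A] [Finite B] {f : A → B}
    {t : ℕ} (hfiber : ∀ b, Nat.card {a // f a = b} ≤ t) (hcard : Nat.card B * t ≤ Nat.card A)
    (b : B) : Nat.card {a // f a = b} = t := by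
  have := Fintype.ofFinite B
  have hsum : ∑ b, Nat.card {a // f a = b} = Nat.card A := by
    rw [← Nat.card_sigma, Nat.card_congr (Equiv.sigmaFiberEquiv f)]
  refine (sum_eq_sum_iff_of_le fun b _ => hfiber b).1 ?_ b (mem_univ b)
  refine le_antisymm (sum_le_sum fun b _ => hfiber b) ?_
  simpa [hsum] using hcard

theorem card_and_eq_apply {A B : Type*} (φ : A → B) (G : A → B → Prop) :
    Nat.card {x : A × B // G x.1 x.2 ∧ x.2 = φ x.1} = Nat.card {a // G a (φ a)} :=
  Nat.card_congr
    { toFun := fun x => ⟨x.1.1, x.2.2 ▸ x.2.1⟩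
      invFun := fun a => ⟨(a.1, φ a.1), a.2, rfl⟩
      left_inv := by
        rintro ⟨⟨a, b⟩, hG, hb⟩
        exact Subtype.ext (Prod.ext rfl hb.symm)
      right_inv := fun _ => rfl }

theorem card_fiber_mul_card_of_ne_zero {K V : Type*} [Field K] [AddCommGroup V] [Module K V]
    {g : Module.Dual K V} (hg : g ≠ 0) (a : K) :
    Nat.card {v // g v = a} * Nat.card K = Nat.card V := by
  obtain ⟨w, hw⟩ := g.surjective hg 1
  rw [← Nat.card_prod]
  exact Nat.card_congr
    { toFun := fun p => p.1 + p.2 • w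
      invFun := fun v => (⟨v - (g v - a) • w, by simp [hw]⟩, g v - a)
      left_inv := by
        rintro ⟨⟨v, rfl⟩, s⟩
        simp [hw]
      right_inv := fun v => by simp }

theorem card_inf_ker_mul_card {K V : Type*} [Field K] [AddCommGroup V] [Module K V]
    {W : Submodule K V} {g : Module.Dual K V} (hg : ¬ W ≤ LinearMap.ker g) :
    Nat.card ↥(W ⊓ LinearMap.ker g) * Nat.card K = Nat.card W := by
  have hrestrict : g.domRestrict W ≠ 0 := fun h => hg fun w hw => LinearMap.congr_fun h ⟨w, hw⟩
  rw [← card_fiber_mul_card_of_ne_zero hrestrict 0]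
  congr 1
  exact Nat.card_congr (Equiv.subtypeSubtypeEquivSubtypeInter (· ∈ W) (g · = 0)).symm

theorem one_lt_of_natCard_eq_sq {A : Type*} [Finite A] [Nontrivial A] {q : ℕ}
    (hA : Nat.card A = q ^ 2) : 1 < q :=
  (Nat.one_lt_pow_iff two_ne_zero).1 (hA ▸ Finite.one_lt_card)

theorem card_pow_add_eval_eq_zero_le {R : Type*} [CommRing R] [IsDomain R] {d : ℕ} {p : R[X]}
    (hp : p.degree < d) : Nat.card {x : R // x ^ d + p.eval x = 0} ≤ d := by
  have hmonic := monic_X_pow_add hp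
  have hdeg : (X ^ d + p).natDegree = d := by
    rw [natDegree_eq_of_degree_eq_some]
    rw [degree_add_eq_left_of_degree_lt] <;> simp [hp]
  calc Nat.card {x : R // x ^ d + p.eval x = 0}
      = ((X ^ d + p).rootSet R).ncard := by
        rw [← Nat.card_coe_set_eq]
        exact Nat.card_congr (Equiv.subtypeEquivRight fun x => by
          simp [mem_rootSet, hmonic.ne_zero])
    _ ≤ d := (ncard_rootSet_le _ R).trans_eq hdeg

end Fibers

section ArtinSchreier

variable {F : Type*} [Field F] {p : ℕ} [Fact p.Prime] [CharP F p]

theorem pow_natCard [Finite F] (x : F) : x ^ Nat.card F = x := by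
  have := Fintype.ofFinite F
  rw [Nat.card_eq_fintype_card, FiniteField.pow_card]

theorem sum_pow_sub_self_pow (u : F) (k : ℕ) :
    ∑ i ∈ range k, (u ^ p - u) ^ p ^ i = u ^ p ^ k - u := by
  simp_rw [sub_pow_char_pow, ← pow_mul, ← pow_succ']
  simpa using sum_range_sub (fun i => u ^ p ^ i) k

/- The additive map `u ↦ u ^ p - u` has fibers of size at most `p` and takes values in the roots of
the trace polynomial, of which there are at most `p ^ (k - 1)`; hence it hits every such root. -/
theorem exists_pow_sub_self_eq [Finite F] {k : ℕ} (hF : Nat.card F = p ^ k) {e : F}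
    (he : ∑ i ∈ range k, e ^ p ^ i = 0) : ∃ u : F, u ^ p - u = e := by
  have hp : 1 < p := (Fact.out : p.Prime).one_lt
  obtain ⟨l, rfl⟩ : ∃ l, k = l + 1 := by
    refine Nat.exists_eq_succ_of_ne_zero ?_
    rintro rfl
    exact Finite.one_lt_card.ne' (hF.trans (pow_zero p))
  let f : F → {x : F // ∑ i ∈ range (l + 1), x ^ p ^ i = 0} := fun u =>
    ⟨u ^ p - u, by rw [sum_pow_sub_self_pow, ← hF, pow_natCard, sub_self]⟩
  have hroots : Nat.card {x : F // ∑ i ∈ range (l + 1), x ^ p ^ i = 0} ≤ p ^ l := by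
    have hdeg : (∑ i ∈ range l, (X : F[X]) ^ p ^ i).degree < (p ^ l : ℕ) := by
      refine mem_degreeLT.1 (sum_mem fun i hi => mem_degreeLT.2 ?_)
      rw [degree_X_pow]
      exact_mod_cast Nat.pow_lt_pow_right hp (mem_range.1 hi)
    simpa [eval_finsetSum, sum_range_succ, add_comm] using card_pow_add_eval_eq_zero_le hdeg
  have hfiber (y : {x : F // ∑ i ∈ range (l + 1), x ^ p ^ i = 0}) :
      Nat.card {u // f u = y} ≤ p := by
    have hdeg : (-(X + C y.1)).degree < (p : WithBot ℕ) := by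
      rw [degree_neg, degree_X_add_C]
      exact_mod_cast hp
    simpa only [f, Subtype.ext_iff, eval_neg, eval_add, eval_X, eval_C, ← sub_eq_add_neg,
      ← sub_sub, sub_eq_zero] using card_pow_add_eval_eq_zero_le hdeg
  have hcard := card_fiber_eq_of_forall_card_fiber_le hfiber
    (by rw [hF, pow_succ]; exact Nat.mul_le_mul_right p hroots) ⟨e, he⟩
  have : Nonempty {u // f u = ⟨e, he⟩} := (Nat.card_pos_iff.1 (hcard.symm ▸ hp.pos)).1
  obtain ⟨u, hu⟩ := this
  exact ⟨u, congrArg Subtype.val hu⟩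

theorem sum_range_mul_pow (x : F) (m d : ℕ) :
    ∑ i ∈ range (m * d), x ^ p ^ i =
      ∑ j ∈ range d, (∑ i ∈ range m, x ^ p ^ i) ^ p ^ (m * j) := by
  induction d with
  | zero => simp
  | succ d ih =>
    rw [Nat.mul_succ, sum_range_add, ih, sum_range_succ, sum_pow_char_pow]
    simp_rw [← pow_mul, ← pow_add, add_comm]

theorem exists_pow_sub_self_eq_of_subfield [Finite F] {m d : ℕ} (hF : Nat.card F = p ^ (m * d))
    {e : F} (he : ∑ i ∈ range m, e ^ p ^ i = 0) : ∃ u : F, u ^ p ^ m = u ∧ u ^ p - u = e := by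
  obtain ⟨u, hu⟩ := exists_pow_sub_self_eq hF (e := e) (by
    rw [sum_range_mul_pow, he]
    exact sum_eq_zero fun j _ => zero_pow (pow_pos (Fact.out : p.Prime).pos _).ne')
  refine ⟨u, sub_eq_zero.1 ?_, hu⟩
  rw [← sum_pow_sub_self_pow, hu, he]

end ArtinSchreier

/-! ### Hermitian forms over a field with `q ^ 2` elements -/

section StarFrobenius

/-- The Frobenius map `x ↦ x ^ q` of a field with `q ^ 2` elements as a star operation. Its
self-adjoint elements form the subfield `GF(q)`, with relative trace `x + star x` and relative norm
`x * star x`. -/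
abbrev frobeniusStarRing {F : Type*} [Field F] [Finite F] {p m q : ℕ} [Fact p.Prime] [CharP F p]
    (hq : q = p ^ m) (hF : Nat.card F = q ^ 2) : StarRing F where
  star x := x ^ q
  star_involutive x := by
    change (x ^ q) ^ q = x
    rw [← pow_mul, ← sq, ← hF, pow_natCard]
  star_mul x y := by rw [mul_pow, mul_comm]
  star_add x y := by rw [hq, add_pow_char_pow]

variable {F : Type*} [Field F] [StarRing F] {q : ℕ}

theorem card_isSelfAdjoint_le (hstar : ∀ x : F, star x = x ^ q) (hq : 1 < q) :
    Nat.card {x : F // IsSelfAdjoint x} ≤ q := by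
  have hdeg : (-X : F[X]).degree < (q : WithBot ℕ) := by
    rw [degree_neg, degree_X]
    exact_mod_cast hq
  simpa [IsSelfAdjoint, hstar, ← sub_eq_add_neg, sub_eq_zero]
    using card_pow_add_eval_eq_zero_le hdeg

theorem card_add_star_eq [Finite F] (hstar : ∀ x : F, star x = x ^ q) (hF : Nat.card F = q ^ 2)
    {k : F} (hk : IsSelfAdjoint k) : Nat.card {x : F // x + star x = k} = q := by
  have hq := one_lt_of_natCard_eq_sq hF
  let f : F → {x : F // IsSelfAdjoint x} := fun x => ⟨x + star x, .add_star_self x⟩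
  have hfiber (k : {x : F // IsSelfAdjoint x}) : Nat.card {x // f x = k} ≤ q := by
    have hdeg : (X - C k.1).degree < (q : WithBot ℕ) := by
      rw [degree_X_sub_C]
      exact_mod_cast hq
    simpa [f, Subtype.ext_iff, hstar, ← add_sub_assoc, sub_eq_zero, add_comm]
      using card_pow_add_eval_eq_zero_le hdeg
  have hcard := card_fiber_eq_of_forall_card_fiber_le hfiber
    (by rw [hF, sq]; exact Nat.mul_le_mul_right q (card_isSelfAdjoint_le hstar hq)) ⟨k, hk⟩
  simpa [f, Subtype.ext_iff] using hcard

theorem card_add_star_eq_and [Finite F] (hstar : ∀ x : F, star x = x ^ q)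
    (hF : Nat.card F = q ^ 2) {A : Type*} [Finite A] {k : A → F} (hk : ∀ a, IsSelfAdjoint (k a))
    (G : A → Prop) :
    Nat.card {x : A × F // x.2 + star x.2 = k x.1 ∧ G x.1} = Nat.card {a // G a} * q := by
  classical
  have := Fintype.ofFinite A
  have hfiber (a : A) :
      Nat.card {y : F // y + star y = k a ∧ G a} = if G a then q else 0 := by
    split_ifs with ha <;> simp [ha, card_add_star_eq hstar hF (hk a)]
  rw [Nat.card_congr (Equiv.subtypeProdEquivSigmaSubtype fun a y => y + star y = k a ∧ G a),
    Nat.card_sigma, sum_congr rfl fun a _ => hfiber a]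
  simp [sum_ite, Nat.card_eq_fintype_card, Fintype.card_subtype]

theorem card_ne_zero_and_isSelfAdjoint_le (hstar : ∀ x : F, star x = x ^ q) (hq : 1 < q) :
    Nat.card {x : F // x ≠ 0 ∧ IsSelfAdjoint x} ≤ q - 1 := by
  have hdeg : (C (-1) : F[X]).degree < ((q - 1 : ℕ) : WithBot ℕ) :=
    degree_C_le.trans_lt (by exact_mod_cast Nat.sub_pos_of_lt hq)
  refine (Nat.card_congr (Equiv.subtypeEquivRight fun x => ?_)).trans_le
    (card_pow_add_eval_eq_zero_le hdeg)
  rw [IsSelfAdjoint, hstar, ← Nat.sub_add_cancel hq.le, pow_succ, eval_C, ← sub_eq_add_neg,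
    sub_eq_zero, Nat.add_sub_cancel]
  refine ⟨fun ⟨hx, h⟩ => (mul_eq_right₀ hx).1 h, fun h => ⟨?_, by rw [h, one_mul]⟩⟩
  rintro rfl
  simp [Nat.sub_ne_zero_of_lt hq] at h

theorem card_mul_star_eq [Finite F] (hstar : ∀ x : F, star x = x ^ q) (hF : Nat.card F = q ^ 2)
    {k : F} (hk : IsSelfAdjoint k) (hk0 : k ≠ 0) : Nat.card {x : F // x * star x = k} = q + 1 := by
  have hq := one_lt_of_natCard_eq_sq hF
  let f : {x : F // x ≠ 0} → {y : F // y ≠ 0 ∧ IsSelfAdjoint y} := fun x =>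
    ⟨x * star x.1, mul_ne_zero x.2 (star_ne_zero.2 x.2), .mul_star_self x.1⟩
  have hfiber_card (y) : Nat.card {x // f x = y} = Nat.card {x : F // x * star x = y} := by
    simp only [f, Subtype.ext_iff]
    refine Nat.card_congr (Equiv.subtypeSubtypeEquivSubtype (p := (· ≠ 0))
      (q := fun x => x * star x = y.1) fun {x} hx => ?_)
    rintro rfl
    exact y.2.1 (by simpa using hx.symm)
  have hfiber (y) : Nat.card {x // f x = y} ≤ q + 1 := by
    have hdeg : (C (-y.1)).degree < ((q + 1 : ℕ) : WithBot ℕ) :=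
      degree_C_le.trans_lt (by exact_mod_cast q.succ_pos)
    rw [hfiber_card]
    simpa only [eval_C, ← sub_eq_add_neg, sub_eq_zero, hstar, ← pow_succ']
      using card_pow_add_eval_eq_zero_le hdeg
  have hunits : Nat.card {x : F // x ≠ 0} = (q - 1) * (q + 1) := by
    rw [← Nat.card_congr unitsEquivNeZero, Nat.card_units, hF, mul_comm, ← Nat.sq_sub_sq, one_pow]
  rw [← hfiber_card ⟨k, hk0, hk⟩]
  refine card_fiber_eq_of_forall_card_fiber_le hfiber ?_ _
  rw [hunits]
  exact Nat.mul_le_mul_right _ (card_ne_zero_and_isSelfAdjoint_le hstar hq)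

theorem isSelfAdjoint_dotProduct_star {R ι : Type*} [Fintype ι] [CommRing R] [StarRing R]
    (z : ι → R) : IsSelfAdjoint (z ⬝ᵥ star z) := by
  rw [IsSelfAdjoint, ← Matrix.star_dotProduct_star, star_star]

theorem card_dotProduct_star_eq_sum [Fintype F] (n : ℕ) (k : F) :
    Nat.card {z : Fin (n + 1) → F // z ⬝ᵥ star z = k} =
      ∑ y : F, Nat.card {z : Fin n → F // z ⬝ᵥ star z = k - y * star y} := by
  rw [← Nat.card_sigma]
  refine Nat.card_congr (((Fin.consEquiv fun _ => F).symm.subtypeEquiv fun z => ?_).trans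
    (Equiv.subtypeProdEquivSigmaSubtype fun y (z : Fin n → F) => z ⬝ᵥ star z = k - y * star y))
  rw [dotProduct, Fin.sum_univ_succ, eq_sub_iff_add_eq']
  rfl

/- Multiplied by `q` so that the formula also covers `n = 0`. -/
theorem card_dotProduct_star_eq [Finite F] (hstar : ∀ x : F, star x = x ^ q)
    (hF : Nat.card F = q ^ 2) (n : ℕ) {k : F} (hk : IsSelfAdjoint k) [Decidable (k = 0)] :
    (q : ℤ) * Nat.card {z : Fin n → F // z ⬝ᵥ star z = k} =
      q ^ (2 * n) + (-q) ^ n * if k = 0 then (q : ℤ) - 1 else -1 := by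
  classical
  induction n generalizing k with
  | zero => by_cases h : k = 0 <;> simp [h, eq_comm (a := (0 : F))]
  | succ n ih =>
    have := Fintype.ofFinite F
    have hcard : #(univ : Finset F) = q ^ 2 := by
      rw [card_univ, ← Nat.card_eq_fintype_card, hF]
    rw [card_dotProduct_star_eq_sum, Nat.cast_sum, mul_sum]
    simp_rw [fun y : F => ih (hk.sub (.mul_star_self y)), sub_eq_zero, sum_add_distrib, ← mul_sum]
    have hnorm : ∑ y : F, (if k = y * star y then (q : ℤ) - 1 else -1) =
        q * Nat.card {y : F // y * star y = k} - q ^ 2 := by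
      have hite (y : F) : (if k = y * star y then (q : ℤ) - 1 else -1) =
          (if y * star y = k then (q : ℤ) else 0) - 1 := by
        split_ifs <;> simp_all
      simp_rw [hite, sum_sub_distrib, sum_ite, Nat.card_eq_fintype_card, Fintype.card_subtype]
      simp [hcard, mul_comm]
    rw [hnorm, sum_const, hcard, nsmul_eq_mul]
    split_ifs with hk0
    · have hzero : Nat.card {y : F // y * star y = k} = 1 := by
        subst hk0
        simp
      rw [hzero]
      push_cast
      ring
    · rw [card_mul_star_eq hstar hF hk hk0]
      push_cast
      ring

theorem card_dotProduct_star_eq_zero_of_odd [Finite F] (hstar : ∀ x : F, star x = x ^ q)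
    (hF : Nat.card F = q ^ 2) {n : ℕ} (hn : Odd n) :
    Nat.card {z : Fin n → F // z ⬝ᵥ star z = 0} = q ^ (2 * n - 1) - q ^ n + q ^ (n - 1) := by
  classical
  have hq := one_lt_of_natCard_eq_sq hF
  have hcard := card_dotProduct_star_eq hstar hF n (.zero F)
  obtain ⟨l, rfl⟩ : ∃ l, n = l + 1 := Nat.exists_eq_succ_of_ne_zero hn.pos.ne'
  rw [if_pos rfl, hn.neg_pow] at hcard
  have hle : q ^ (l + 1) ≤ q ^ (2 * (l + 1) - 1) := Nat.pow_le_pow_right hq.le (by lia)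
  refine Nat.eq_of_mul_eq_mul_left (zero_lt_one.trans hq) (Nat.cast_injective (R := ℤ) ?_)
  push_cast [hle]
  rw [hcard, show 2 * (l + 1) - 1 = 2 * l + 1 by lia]
  ring

theorem card_dotProduct_star_eq_of_odd_of_ne_zero [Finite F] (hstar : ∀ x : F, star x = x ^ q)
    (hF : Nat.card F = q ^ 2) {n : ℕ} (hn : Odd n) {k : F} (hk : IsSelfAdjoint k) (hk0 : k ≠ 0) :
    Nat.card {z : Fin n → F // z ⬝ᵥ star z = k} = q ^ (2 * n - 1) + q ^ (n - 1) := by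
  classical
  have hq := one_lt_of_natCard_eq_sq hF
  have hcard := card_dotProduct_star_eq hstar hF n hk
  obtain ⟨l, rfl⟩ : ∃ l, n = l + 1 := Nat.exists_eq_succ_of_ne_zero hn.pos.ne'
  rw [if_neg hk0, hn.neg_pow] at hcard
  refine Nat.eq_of_mul_eq_mul_left (zero_lt_one.trans hq) (Nat.cast_injective (R := ℤ) ?_)
  push_cast
  rw [hcard, show 2 * (l + 1) - 1 = 2 * l + 1 by lia]
  ring

end StarFrobenius

/-! ### Quadratic forms that become Hermitian in characteristic two -/

section TwistedForm

variable {ι R : Type*} [Fintype ι] [CommRing R] [StarRing R]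

theorem dotProduct_star_add_add (z w : ι → R) :
    (z + w) ⬝ᵥ star (z + w) =
      z ⬝ᵥ star z + w ⬝ᵥ star w + (z ⬝ᵥ star w + star (z ⬝ᵥ star w)) := by
  rw [star_add, add_dotProduct, dotProduct_add, dotProduct_add, ← Matrix.star_dotProduct_star,
    star_star]
  ring

/-- The map `z ↦ z + c Tr⟨z, v⟩ v`, where `⟨z, v⟩ = z ⬝ᵥ star v` and `Tr x = x + star x`. It is
additive but, unlike a unitary transvection, not linear over the full ring. -/
def traceTransvection (c : R) (v z : ι → R) : ι → R :=
  z + (c * (z ⬝ᵥ star v + star (z ⬝ᵥ star v))) • v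

/-- The quadratic form `b⟨z, z⟩ + Tr (α (∑ i, z i) ^ 2)` over the self-adjoint elements, where
`⟨z, z⟩ = z ⬝ᵥ star z` and `Tr x = x + star x`. An affine point with coordinates `(z, y)` lies on
the hypersurface exactly when `Tr y` is the value of this form at `z` for `b = β ^ q - β`. -/
def twistedForm (α b : R) (z : ι → R) : R :=
  b * (z ⬝ᵥ star z) + (α * (∑ i, z i) ^ 2 + star (α * (∑ i, z i) ^ 2))

theorem isSelfAdjoint_twistedForm {b : R} (hb : IsSelfAdjoint b) (α : R) (z : ι → R) :
    IsSelfAdjoint (twistedForm α b z) :=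
  (hb.mul (isSelfAdjoint_dotProduct_star z)).add (.add_star_self _)

theorem dotProduct_star_traceTransvection {c : R} (hc : IsSelfAdjoint c) (v z : ι → R) :
    traceTransvection c v z ⬝ᵥ star (traceTransvection c v z) = z ⬝ᵥ star z +
      (c ^ 2 * (v ⬝ᵥ star v) + c) * (z ⬝ᵥ star v + star (z ⬝ᵥ star v)) ^ 2 := by
  have hs := hc.mul (IsSelfAdjoint.add_star_self (z ⬝ᵥ star v))
  rw [traceTransvection, dotProduct_star_add_add, star_smul, hs.star_eq]
  simp only [smul_dotProduct, dotProduct_smul, smul_eq_mul, star_mul', hs.star_eq]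
  ring

variable [CharP R 2]

theorem twistedForm_add {b : R} (hb : IsSelfAdjoint b) (α : R) (z w : ι → R) :
    twistedForm α b (z + w) = twistedForm α b z + twistedForm α b w +
      (b * (z ⬝ᵥ star w) + star (b * (z ⬝ᵥ star w))) := by
  rw [twistedForm, dotProduct_star_add_add]
  simp only [twistedForm, Pi.add_apply, sum_add_distrib, CharTwo.add_sq, star_add, star_mul',
    hb.star_eq, mul_add]
  ring

theorem traceTransvection_involutive {c : R} (hc : IsSelfAdjoint c) (v : ι → R) :
    Function.Involutive (traceTransvection c v) := fun z => by
  have hs := hc.mul (IsSelfAdjoint.add_star_self (z ⬝ᵥ star v))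
  have htrace : traceTransvection c v z ⬝ᵥ star v + star (traceTransvection c v z ⬝ᵥ star v) =
      z ⬝ᵥ star v + star (z ⬝ᵥ star v) := by
    simp only [traceTransvection, add_dotProduct, smul_dotProduct, smul_eq_mul, star_add, star_mul',
      hs.star_eq, (isSelfAdjoint_dotProduct_star v).star_eq]
    linear_combination
      CharTwo.add_self_eq_zero (c * (z ⬝ᵥ star v + star (z ⬝ᵥ star v)) * (v ⬝ᵥ star v))
  rw [traceTransvection, htrace, traceTransvection, add_assoc, ← add_smul,
    CharTwo.add_self_eq_zero, zero_smul, add_zero]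

theorem twistedForm_sq_eq_of_odd (hι : Odd (Fintype.card ι)) {a b c : R} (hc : IsSelfAdjoint c)
    (hbc : b * (c ^ 2 * (a * star a) + c) = 1) (z : ι → R) :
    twistedForm (a ^ 2) b z = b * (traceTransvection c (fun _ => star a) z ⬝ᵥ
      star (traceTransvection c (fun _ => star a) z)) := by
  have hz : z ⬝ᵥ star (fun _ => star a) = a * ∑ i, z i := by
    simp [dotProduct, mul_sum, mul_comm]
  have hv : (fun _ : ι => star a) ⬝ᵥ star (fun _ => star a) = a * star a := by
    obtain ⟨l, hl⟩ := hι
    simp [dotProduct, hl, CharTwo.two_eq_zero, mul_comm]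
  rw [dotProduct_star_traceTransvection hc, hz, hv, mul_add, ← mul_assoc, hbc, one_mul,
    CharTwo.add_sq, twistedForm, ← mul_pow, star_pow]

end TwistedForm

section TwistedFormCount

variable {F : Type*} [Field F] [StarRing F] [CharP F 2] {q m : ℕ}

theorem exists_sq_mul_add_eq_inv {N b u : F} (hN : IsSelfAdjoint N) (hb : IsSelfAdjoint b)
    (hu : IsSelfAdjoint u) (hu_eq : u ^ 2 - u = N / b) :
    ∃ c, IsSelfAdjoint c ∧ c ^ 2 * N + c = b⁻¹ := by
  rcases eq_or_ne N 0 with rfl | hN0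
  · exact ⟨b⁻¹, hb.inv₀, by simp⟩
  · refine ⟨u / N, hu.div hN, ?_⟩
    calc (u / N) ^ 2 * N + u / N = (u ^ 2 - u) / N := by
          rw [CharTwo.sub_eq_add]
          field_simp
      _ = b⁻¹ := by rw [hu_eq, div_div_cancel_left' hN0]

theorem exists_equiv_twistedForm_eq [Finite F] (hstar : ∀ x : F, star x = x ^ q) (hq : q = 2 ^ m)
    (hF : Nat.card F = q ^ 2) {ι : Type*} [Fintype ι] (hι : Odd (Fintype.card ι)) {α b : F}
    (hb : IsSelfAdjoint b) (hb0 : b ≠ 0)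
    (htr : ∑ i ∈ range m, (α * star α / b ^ 2) ^ 2 ^ i = 0) :
    ∃ T : (ι → F) ≃ (ι → F), ∀ z, twistedForm α b z = b * (T z ⬝ᵥ star (T z)) := by
  obtain ⟨a, rfl⟩ : ∃ a, a ^ 2 = α := (FiniteField.isSquare_of_char_two (ringChar.eq F 2) α).imp
    fun a ha => by rw [sq, ha]
  have htr_sqrt : ∑ i ∈ range m, (a * star a / b) ^ 2 ^ i = 0 := by
    rw [← sq_eq_zero_iff, CharTwo.sum_sq, ← htr]
    refine sum_congr rfl fun i _ => ?_
    rw [← pow_mul', pow_mul, div_pow, mul_pow, star_pow]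
  obtain ⟨u, hu, hu_eq⟩ := exists_pow_sub_self_eq_of_subfield (by rw [hF, hq, pow_mul]) htr_sqrt
  obtain ⟨c, hc, hc_eq⟩ := exists_sq_mul_add_eq_inv (.mul_star_self a) hb
    (by rw [IsSelfAdjoint, hstar, hq, hu]) hu_eq
  exact ⟨(traceTransvection_involutive hc _).toPerm, twistedForm_sq_eq_of_odd hι hc
    (by rw [hc_eq, mul_inv_cancel₀ hb0])⟩

theorem exists_card_twistedForm_add_eq {ι : Type*} [Fintype ι] {α b : F} (hb : IsSelfAdjoint b)
    (hb0 : b ≠ 0) {T : (ι → F) ≃ (ι → F)} (hT : ∀ z, twistedForm α b z = b * (T z ⬝ᵥ star (T z)))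
    {t : F} (ht : IsSelfAdjoint t) (g : ι → F) :
    ∃ k, IsSelfAdjoint k ∧
      Nat.card {z // twistedForm α b z + (g ⬝ᵥ z + star (g ⬝ᵥ z)) = t} =
        Nat.card {z : ι → F // z ⬝ᵥ star z = k} := by
  let w := star (b⁻¹ • g)
  have hw (z : ι → F) : b * (z ⬝ᵥ star w) = g ⬝ᵥ z := by
    rw [star_star, dotProduct_smul, smul_eq_mul, mul_inv_cancel_left₀ hb0, dotProduct_comm]
  refine ⟨(t + twistedForm α b w) / b, (ht.add (isSelfAdjoint_twistedForm hb α w)).div hb, ?_⟩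
  refine Nat.card_congr (((Equiv.addRight w).trans T).subtypeEquiv fun z => ?_)
  rw [Equiv.trans_apply, Equiv.coe_addRight, eq_div_iff hb0, mul_comm _ b, ← hT,
    twistedForm_add hb, hw, add_right_comm, add_left_inj]

theorem card_twistedForm_add_eq_mem [Finite F] (hstar : ∀ x : F, star x = x ^ q) (hq : q = 2 ^ m)
    (hF : Nat.card F = q ^ 2) {n : ℕ} (hn : Odd n) {α b : F} (hb : IsSelfAdjoint b) (hb0 : b ≠ 0)
    (htr : ∑ i ∈ range m, (α * star α / b ^ 2) ^ 2 ^ i = 0) {t : F} (ht : IsSelfAdjoint t)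
    (g : Fin n → F) :
    Nat.card {z // twistedForm α b z + (g ⬝ᵥ z + star (g ⬝ᵥ z)) = t} ∈
      ({q ^ (2 * n - 1) - q ^ n + q ^ (n - 1), q ^ (2 * n - 1) + q ^ (n - 1)} : Set ℕ) := by
  obtain ⟨T, hT⟩ := exists_equiv_twistedForm_eq hstar hq hF (ι := Fin n)
    (by rwa [Fintype.card_fin]) hb hb0 htr
  obtain ⟨k, hk, hcard⟩ := exists_card_twistedForm_add_eq hb hb0 hT ht g
  rw [hcard]
  rcases eq_or_ne k 0 with rfl | hk0
  · exact Or.inl (card_dotProduct_star_eq_zero_of_odd hstar hF hn)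
  · exact Or.inr (card_dotProduct_star_eq_of_odd_of_ne_zero hstar hF hn hk hk0)

end TwistedFormCount

/-! ### Counting points of projective space -/

section Projective

variable {K : Type*} [Field K]

theorem rep_mk_mem_iff {V : Type*} [AddCommGroup V] [Module K V] (W : Submodule K V) {v : V}
    (hv : v ≠ 0) : (Projectivization.mk K v hv).rep ∈ W ↔ v ∈ W := by
  obtain ⟨a, ha⟩ := Projectivization.exists_smul_eq_mk_rep K v hv
  rw [← ha, Units.smul_def, W.smul_mem_iff a.ne_zero]

theorem card_rep_mem [Finite K] {V : Type*} [AddCommGroup V] [Module K V] (W : Submodule K V) :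
    Nat.card {P : ℙ K V // P.rep ∈ W} = (Nat.card W - 1) / (Nat.card K - 1) := by
  have hrange : Set.range (Projectivization.map W.subtype W.subtype_injective) =
      {P : ℙ K V | P.rep ∈ W} := by
    ext P
    refine ⟨?_, fun hP => ⟨.mk K ⟨P.rep, hP⟩ fun h => P.rep_nonzero (congrArg Subtype.val h), ?_⟩⟩
    · rintro ⟨Q, rfl⟩
      induction Q using Projectivization.ind with
      | h v hv => exact (rep_mk_mem_iff W _).2 v.2
    · rw [Projectivization.map_mk]
      exact P.mk_rep
  rw [← Projectivization.card'' K W, ← Nat.card_range_of_injective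
    (Projectivization.map_injective W.subtype W.subtype_injective), hrange]
  rfl

theorem rep_mk_apply_div {ι : Type*} {v : ι → K} (hv : v ≠ 0) (i j : ι) :
    (Projectivization.mk K v hv).rep i / (Projectivization.mk K v hv).rep j = v i / v j := by
  obtain ⟨a, ha⟩ := Projectivization.exists_smul_eq_mk_rep K v hv
  rw [← ha, Units.smul_def, Pi.smul_apply, Pi.smul_apply, smul_eq_mul, smul_eq_mul,
    mul_div_mul_left _ _ a.ne_zero]

/-- The bijection from the points of projective space off the hyperplane `X₀ = 0` to affine space,
`(X₀ : X₁ : … : X_N) ↦ (X₁ / X₀, …, X_N / X₀)`. -/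
noncomputable def affineChart (K : Type*) [Field K] (N : ℕ) :
    {P : ℙ K (Fin (N + 1) → K) // P.rep 0 ≠ 0} ≃ (Fin N → K) where
  toFun P i := P.1.rep i.succ / P.1.rep 0
  invFun x := by
    have hx : (Fin.cons 1 x : Fin (N + 1) → K) ≠ 0 := fun h => one_ne_zero (congrFun h 0)
    exact ⟨.mk K (Fin.cons 1 x) hx,
      (rep_mk_mem_iff (LinearMap.ker (LinearMap.proj (φ := fun _ => K) 0)) hx).not.2 (by simp)⟩
  left_inv P := by
    refine Subtype.ext (Eq.trans ?_ P.1.mk_rep)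
    refine (Projectivization.mk_eq_mk_iff' K _ _ _ _).2 ⟨(P.1.rep 0)⁻¹, ?_⟩
    ext i
    cases i using Fin.cases with
    | zero => simp [P.2]
    | succ i => simp [div_eq_inv_mul]
  right_inv x := by
    ext i
    simp [rep_mk_apply_div]

theorem cons_one_affineChart {N : ℕ} (P : {P : ℙ K (Fin (N + 1) → K) // P.rep 0 ≠ 0}) :
    Fin.cons 1 (affineChart K N P) = fun i => P.1.rep i / P.1.rep 0 := by
  ext i
  cases i using Fin.cases with
  | zero => simp [div_self P.2]
  | succ i => rfl

/-- The point of `(n + 2)`-dimensional space with coordinates `(1, z, y)`, which represents the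
affine point `(z, y)`. -/
def affineVec {n : ℕ} (x : (Fin n → K) × K) : Fin (n + 1 + 1) → K :=
  Fin.cons 1 (Fin.snoc x.1 x.2)

@[simp]
theorem affineVec_zero {n : ℕ} (x : (Fin n → K) × K) : affineVec x 0 = 1 := rfl

@[simp]
theorem affineVec_castSucc_succ {n : ℕ} (x : (Fin n → K) × K) (i : Fin n) :
    affineVec x i.castSucc.succ = x.1 i := by
  rw [affineVec, Fin.cons_succ, Fin.snoc_castSucc]

@[simp]
theorem affineVec_last {n : ℕ} (x : (Fin n → K) × K) : affineVec x (Fin.last _) = x.2 := by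
  rw [affineVec, ← Fin.succ_last, Fin.cons_succ, Fin.snoc_last]

theorem card_affine_points {n : ℕ} (G : (Fin (n + 1 + 1) → K) → Prop) :
    Nat.card {P : ℙ K (Fin (n + 1 + 1) → K) // P.rep 0 ≠ 0 ∧ G fun i => P.rep i / P.rep 0} =
      Nat.card {x : (Fin n → K) × K // G (affineVec x)} := by
  let chart := (affineChart K (n + 1)).trans
    ((Fin.snocEquiv fun _ => K).symm.trans (Equiv.prodComm _ _))
  refine Nat.card_congr ((Equiv.subtypeSubtypeEquivSubtypeInter _
    fun P : ℙ K (Fin (n + 1 + 1) → K) => G fun i => P.rep i / P.rep 0).symm.trans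
      (chart.subtypeEquiv fun P => ?_))
  rw [← cons_one_affineChart]
  simp [chart, affineVec]

theorem exists_dual_eq {n : ℕ} (f : Module.Dual K (Fin (n + 1 + 1) → K)) :
    ∃ (c₀ : K) (g : Fin n → K), ∀ v, f v =
      c₀ * v 0 + ((g ⬝ᵥ fun i => v i.castSucc.succ) + f (Pi.single (Fin.last _) 1) *
        v (Fin.last _)) := by
  obtain ⟨c, rfl⟩ := (dotProductEquiv K _).surjective f
  refine ⟨c 0, fun i => c i.castSucc.succ, fun v => ?_⟩
  rw [dotProductEquiv_apply_apply, dotProductEquiv_apply_apply, dotProduct_single_one, dotProduct,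
    Fin.sum_univ_succ, Fin.sum_univ_castSucc]
  rfl

theorem sum_ite_one_le_and_lt {M : Type*} [AddCommMonoid M] {n : ℕ} (g : Fin (n + 1 + 1) → M) :
    (∑ i, if 1 ≤ i.1 ∧ i.1 < n + 1 then g i else 0) = ∑ i : Fin n, g i.castSucc.succ := by
  rw [Fin.sum_univ_succ, Fin.sum_univ_castSucc]
  simp

end Projective

/-! ### The hypersurface in even characteristic -/

section Hypersurface

variable {F : Type*} [Field F] {q n : ℕ}

/-- The linear form `X₁ + ⋯ + Xₙ` on the space with coordinates `X₀, …, X_{n + 1}`. -/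
def middleSum (F : Type*) [Field F] (n : ℕ) : Module.Dual F (Fin (n + 1 + 1) → F) :=
  ∑ i : Fin n, LinearMap.proj (φ := fun _ => F) i.castSucc.succ

/-- The subspace `X₀ = X₁ + ⋯ + Xₙ = 0` of the space with coordinates `X₀, …, X_{n + 1}`. In
characteristic two its points are the points at infinity of the hypersurface. -/
def infinitySubspace (F : Type*) [Field F] (n : ℕ) : Submodule F (Fin (n + 1 + 1) → F) :=
  LinearMap.ker (LinearMap.proj (φ := fun _ => F) 0) ⊓ LinearMap.ker (middleSum F n)

theorem mem_infinitySubspace {v : Fin (n + 1 + 1) → F} :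
    v ∈ infinitySubspace F n ↔ v 0 = 0 ∧ ∑ i : Fin n, v i.castSucc.succ = 0 := by
  simp [infinitySubspace, middleSum, LinearMap.sum_apply]

theorem card_infinitySubspace [Finite F] (hn : n ≠ 0) :
    Nat.card (infinitySubspace F n) = Nat.card F ^ n := by
  have hproj : (LinearMap.proj 0 : Module.Dual F (Fin (n + 1 + 1) → F)) ≠ 0 := fun h => by
    simpa using LinearMap.congr_fun h 1
  have hsum : ¬ LinearMap.ker (LinearMap.proj (φ := fun _ => F) 0) ≤
      LinearMap.ker (middleSum F n) := fun h => by
    let i : Fin n := ⟨0, Nat.pos_of_ne_zero hn⟩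
    have hmem := h (x := Pi.single i.castSucc.succ 1) (by simp)
    simp [middleSum, LinearMap.sum_apply, Pi.single_apply] at hmem
  have hpos : 0 < Nat.card F := Nat.card_pos
  refine Nat.eq_of_mul_eq_mul_right hpos (Nat.eq_of_mul_eq_mul_right hpos ?_)
  rw [infinitySubspace, card_inf_ker_mul_card hsum, ← pow_succ, ← pow_succ]
  refine (card_fiber_mul_card_of_ne_zero hproj 0).trans ?_
  rw [Nat.card_fun, Nat.card_fin]

theorem card_infinitySubspace_inf_ker [Finite F] (hn : n ≠ 0)
    {f : Module.Dual F (Fin (n + 1 + 1) → F)} (hf : ¬ infinitySubspace F n ≤ LinearMap.ker f) :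
    Nat.card ↥(infinitySubspace F n ⊓ LinearMap.ker f) = Nat.card F ^ (n - 1) := by
  obtain ⟨l, rfl⟩ := Nat.exists_eq_succ_of_ne_zero hn
  refine Nat.eq_of_mul_eq_mul_right (Nat.card_pos (α := F)) ?_
  rw [card_inf_ker_mul_card hf, card_infinitySubspace hn, Nat.succ_sub_one, pow_succ]

theorem card_add_dotProduct_eq_zero_mul [Finite F] (hF : Nat.card F = q ^ 2) (hn : n ≠ 0) (c₀ : F)
    {g : Fin n → F} (hg : g ≠ 0) :
    Nat.card {z // c₀ + g ⬝ᵥ z = 0} * q = q ^ (2 * n - 1) := by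
  have hg' : dotProductEquiv F _ g ≠ 0 := (dotProductEquiv F _).map_ne_zero_iff.2 hg
  have hcard := card_fiber_mul_card_of_ne_zero hg' (-c₀)
  simp only [dotProductEquiv_apply_apply, eq_neg_iff_add_eq_zero, add_comm _ c₀, Nat.card_fun,
    Nat.card_fin, hF] at hcard
  have hq := one_lt_of_natCard_eq_sq hF
  refine Nat.eq_of_mul_eq_mul_right (zero_lt_one.trans hq) ?_
  rw [mul_assoc, ← sq, hcard, ← pow_mul, ← pow_succ, Nat.sub_add_cancel (by lia)]

variable [CharP F 2]

theorem mem_bset_iff {α β : F} {P : ℙ F (Fin (n + 1 + 1) → F)} :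
    P ∈ Bset F q (n + 1) α β ↔
      (P.rep 0 ≠ 0 ∧ affEq q (n + 1) α β fun i => P.rep i / P.rep 0) ∨
        P.rep ∈ infinitySubspace F n := by
  rw [mem_infinitySubspace, Bset, Set.mem_ofPred_eq, sum_ite_one_le_and_lt, ← CharTwo.sum_sq,
    sq_eq_zero_iff]

variable [StarRing F] {m : ℕ} {α β : F}

theorem affEq_affineVec_iff (hstar : ∀ x : F, star x = x ^ q) (x : (Fin n → F) × F) :
    affEq q (n + 1) α β (affineVec x) ↔
      x.2 + star x.2 = twistedForm α (β ^ q - β) x.1 := by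
  have hnorm : ∑ i, x.1 i ^ (q + 1) = x.1 ⬝ᵥ star x.1 :=
    sum_congr rfl fun i _ => by rw [pow_succ', Pi.star_apply, hstar]
  have htrace : α ^ q * ∑ i, x.1 i ^ (2 * q) = star (α * (∑ i, x.1 i) ^ 2) := by
    rw [star_mul', star_pow, star_sum, CharTwo.sum_sq, hstar]
    simp_rw [hstar, pow_mul']
  rw [affEq, sum_ite_one_le_and_lt, sum_ite_one_le_and_lt, sum_ite_one_le_and_lt]
  simp only [affineVec_last, affineVec_castSucc_succ]
  rw [hnorm, htrace, ← CharTwo.sum_sq, ← hstar x.2, twistedForm]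
  simp only [CharTwo.sub_eq_add]
  rw [add_assoc, ← eq_sub_iff_add_eq, CharTwo.sub_eq_add, add_comm x.2, add_comm (star (α * _))]

theorem card_bset_inter (hstar : ∀ x : F, star x = x ^ q) [Finite F]
    (f : Module.Dual F (Fin (n + 1 + 1) → F)) :
    Nat.card ↥(Bset F q (n + 1) α β ∩ {P | f P.rep = 0}) =
      Nat.card {x : (Fin n → F) × F //
        x.2 + star x.2 = twistedForm α (β ^ q - β) x.1 ∧ f (affineVec x) = 0} +
      (Nat.card ↥(infinitySubspace F n ⊓ LinearMap.ker f) - 1) / (Nat.card F - 1) := by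
  have hsplit : Bset F q (n + 1) α β ∩ {P | f P.rep = 0} =
      {P | P.rep 0 ≠ 0 ∧ affEq q (n + 1) α β (fun i => P.rep i / P.rep 0) ∧
        f (fun i => P.rep i / P.rep 0) = 0} ∪
      {P | P.rep ∈ infinitySubspace F n ⊓ LinearMap.ker f} := by
    ext P
    have hdiv (hP : P.rep 0 ≠ 0) : f (fun i => P.rep i / P.rep 0) = 0 ↔ f P.rep = 0 := by
      have : (fun i => P.rep i / P.rep 0) = (P.rep 0)⁻¹ • P.rep := by
        ext i
        rw [Pi.smul_apply, smul_eq_mul, div_eq_inv_mul]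
      rw [this, map_smul, smul_eq_zero_iff_right (inv_ne_zero hP)]
    simp only [Set.mem_inter_iff, mem_bset_iff, Set.mem_union, Set.mem_ofPred_eq, Submodule.mem_inf,
      LinearMap.mem_ker]
    grind
  have hdisjoint : Disjoint
      {P : ℙ F (Fin (n + 1 + 1) → F) | P.rep 0 ≠ 0 ∧
        affEq q (n + 1) α β (fun i => P.rep i / P.rep 0) ∧ f (fun i => P.rep i / P.rep 0) = 0}
      {P | P.rep ∈ infinitySubspace F n ⊓ LinearMap.ker f} :=
    Set.disjoint_left.2 fun P hP hP' => hP.1 (mem_infinitySubspace.1 hP'.1).1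
  rw [hsplit, Nat.card_coe_set_eq, Set.ncard_union_eq hdisjoint, ← Nat.card_coe_set_eq,
    ← Nat.card_coe_set_eq]
  simp_rw [← affEq_affineVec_iff hstar, ← card_rep_mem]
  exact congrArg (· + _) (card_affine_points fun v => affEq q (n + 1) α β v ∧ f v = 0)

theorem isSelfAdjoint_pow_sub_self (hstar : ∀ x : F, star x = x ^ q) (β : F) :
    IsSelfAdjoint (β ^ q - β) := by
  rw [← hstar, CharTwo.sub_eq_add]
  exact .star_add_self β

theorem card_affine_inter_mem [Finite F] (hstar : ∀ x : F, star x = x ^ q) (hq : q = 2 ^ m)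
    (hF : Nat.card F = q ^ 2) (hn : Odd n) {b : F} (hb : IsSelfAdjoint b) (hb0 : b ≠ 0)
    (htr : ∑ i ∈ range m, (α * star α / b ^ 2) ^ 2 ^ i = 0) (c₀ : F) (g : Fin n → F) {d : F}
    (hd : d ≠ 0) :
    Nat.card {x : (Fin n → F) × F //
        x.2 + star x.2 = twistedForm α b x.1 ∧ c₀ + (g ⬝ᵥ x.1 + d * x.2) = 0} ∈
      ({q ^ (2 * n - 1) - q ^ n + q ^ (n - 1), q ^ (2 * n - 1) + q ^ (n - 1)} : Set ℕ) := by
  have hgraph (z : Fin n → F) (y : F) :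
      c₀ + (g ⬝ᵥ z + d * y) = 0 ↔ y = d⁻¹ * c₀ + (d⁻¹ • g) ⬝ᵥ z := by
    rw [← add_assoc, CharTwo.add_eq_zero, eq_comm, ← eq_inv_mul_iff_mul_eq₀ hd, mul_add,
      smul_dotProduct, smul_eq_mul]
  have hcard := card_twistedForm_add_eq_mem hstar hq hF hn hb hb0 htr
    (.add_star_self (d⁻¹ * c₀)) (d⁻¹ • g)
  simp_rw [hgraph]
  rw [card_and_eq_apply (fun z => d⁻¹ * c₀ + (d⁻¹ • g) ⬝ᵥ z)
    fun z y => y + star y = twistedForm α b z]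
  convert hcard using 4 with z
  rw [star_add, add_add_add_comm, eq_comm, ← CharTwo.add_eq_iff_eq_add]

theorem card_bset [Finite F] (hstar : ∀ x : F, star x = x ^ q) (hF : Nat.card F = q ^ 2)
    (hn : n ≠ 0) : Nat.card ↥(Bset F q (n + 1) α β) =
      q ^ (2 * n + 1) + ∑ i ∈ range n, q ^ (2 * i) := by
  have hq := one_lt_of_natCard_eq_sq hF
  have hinter := card_bset_inter hstar (α := α) (β := β)
    (0 : Module.Dual F (Fin (n + 1 + 1) → F))
  simp only [LinearMap.zero_apply, LinearMap.ker_zero, inf_top_eq, Set.ofPred_true, Set.inter_univ]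
    at hinter
  rw [hinter, card_add_star_eq_and hstar hF
      (isSelfAdjoint_twistedForm (isSelfAdjoint_pow_sub_self hstar β) α) fun _ => True,
    card_infinitySubspace hn, hF, ← Nat.geomSum_eq (Nat.one_lt_pow two_ne_zero hq)]
  simp [hF, pow_mul, pow_succ, Nat.card_fun]

theorem card_bset_inter_mem_of_apply_last_eq_zero [Finite F] (hstar : ∀ x : F, star x = x ^ q)
    (hF : Nat.card F = q ^ 2) (hn : n ≠ 0) {f : Module.Dual F (Fin (n + 1 + 1) → F)} (hf : f ≠ 0)
    (hlast : f (Pi.single (Fin.last _) 1) = 0) :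
    Nat.card ↥(Bset F q (n + 1) α β ∩ {P | f P.rep = 0}) ∈
      ({(q ^ (2 * n) - 1) / (q ^ 2 - 1),
        q ^ (2 * n - 1) + (q ^ (2 * (n - 1)) - 1) / (q ^ 2 - 1),
        q ^ (2 * n - 1) + (q ^ (2 * n) - 1) / (q ^ 2 - 1)} : Set ℕ) := by
  obtain ⟨c₀, g, hf_eq⟩ := exists_dual_eq f
  simp only [hlast, zero_mul, add_zero] at hf_eq
  have hf_affine (x : (Fin n → F) × F) : f (affineVec x) = c₀ + g ⬝ᵥ x.1 := by simp [hf_eq]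
  simp_rw [card_bset_inter hstar, hf_affine]
  rw [card_add_star_eq_and hstar hF
    (isSelfAdjoint_twistedForm (isSelfAdjoint_pow_sub_self hstar β) α) fun z => c₀ + g ⬝ᵥ z = 0]
  by_cases hg : g = 0
  · have hf_eq' (v) : f v = c₀ * v 0 := by simp [hf_eq, hg]
    have hc₀ : c₀ ≠ 0 := by
      rintro rfl
      exact hf (LinearMap.ext fun v => by simp [hf_eq'])
    have hle : infinitySubspace F n ≤ LinearMap.ker f := fun v hv => by
      rw [LinearMap.mem_ker, hf_eq', (mem_infinitySubspace.1 hv).1, mul_zero]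
    rw [inf_eq_left.2 hle, card_infinitySubspace hn, hF, ← pow_mul]
    simp [hg, hc₀]
  · rw [card_add_dotProduct_eq_zero_mul hF hn c₀ hg]
    by_cases hle : infinitySubspace F n ≤ LinearMap.ker f
    · rw [inf_eq_left.2 hle, card_infinitySubspace hn, hF, ← pow_mul]
      simp
    · rw [card_infinitySubspace_inf_ker hn hle, hF, ← pow_mul]
      simp

theorem card_bset_inter_mem_of_apply_last_ne_zero [Finite F] (hstar : ∀ x : F, star x = x ^ q)
    (hq : q = 2 ^ m) (hF : Nat.card F = q ^ 2) (hn : Odd n) (hβ : β ^ q ≠ β)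
    (htr : ∑ i ∈ range m, (α ^ (q + 1) / (β ^ q + β) ^ 2) ^ 2 ^ i = 0)
    {f : Module.Dual F (Fin (n + 1 + 1) → F)} (hlast : f (Pi.single (Fin.last _) 1) ≠ 0) :
    Nat.card ↥(Bset F q (n + 1) α β ∩ {P | f P.rep = 0}) ∈
      ({q ^ (2 * n - 1) - q ^ n + q ^ (n - 1) + (q ^ (2 * (n - 1)) - 1) / (q ^ 2 - 1),
        q ^ (2 * n - 1) + q ^ (n - 1) + (q ^ (2 * (n - 1)) - 1) / (q ^ 2 - 1)} : Set ℕ) := by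
  obtain ⟨c₀, g, hf_eq⟩ := exists_dual_eq f
  have hf_affine (x : (Fin n → F) × F) :
      f (affineVec x) = c₀ + (g ⬝ᵥ x.1 + f (Pi.single (Fin.last _) 1) * x.2) := by
    rw [hf_eq]
    simp
  have hle : ¬ infinitySubspace F n ≤ LinearMap.ker f := fun h =>
    hlast (h (by simp [mem_infinitySubspace]))
  have haffine := card_affine_inter_mem hstar hq hF hn
    (isSelfAdjoint_pow_sub_self hstar β) (sub_ne_zero.2 hβ)
    (by simpa only [CharTwo.sub_eq_add, hstar, ← pow_succ'] using htr) c₀ g hlast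
  simp_rw [card_bset_inter hstar, hf_affine]
  rw [card_infinitySubspace_inf_ker hn.pos.ne' hle, hF, ← pow_mul]
  rcases haffine with hcard | hcard <;> rw [hcard] <;> simp

end Hypersurface

theorem statement5_general (q r m : ℕ) (hm : q = 2 ^ m) (hr : 2 ≤ r) (hreven : Even r)
    (F : Type*) [Field F] [Finite F] (hF : Nat.card F = q ^ 2) (α β : F) (hβ : β ^ q ≠ β)
    (htr : ∑ i ∈ range m, (α ^ (q + 1) / (β ^ q + β) ^ 2) ^ 2 ^ i = 0) :
    Nat.card ↥(Bset F q r α β) = q ^ (2 * r - 1) + ∑ i ∈ range (r - 1), q ^ (2 * i) ∧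
    ∀ f : Module.Dual F (Fin (r + 1) → F), f ≠ 0 →
      Nat.card ↥(Bset F q r α β ∩ {P | f P.rep = 0}) ∈
        ({(q ^ (2 * (r - 1)) - 1) / (q ^ 2 - 1),
          q ^ (2 * r - 3) - q ^ (r - 1) + q ^ (r - 2) + (q ^ (2 * (r - 2)) - 1) / (q ^ 2 - 1),
          q ^ (2 * r - 3) + (q ^ (2 * (r - 2)) - 1) / (q ^ 2 - 1),
          q ^ (2 * r - 3) + q ^ (r - 2) + (q ^ (2 * (r - 2)) - 1) / (q ^ 2 - 1),
          q ^ (2 * r - 3) + (q ^ (2 * (r - 1)) - 1) / (q ^ 2 - 1)} : Set ℕ) := by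
  obtain ⟨n, rfl⟩ : ∃ n, r = n + 1 := Nat.exists_eq_succ_of_ne_zero (by lia)
  have hn : Odd n := by rwa [← Nat.not_even_iff_odd, ← Nat.even_add_one]
  have : CharP F 2 := by
    have := Fintype.ofFinite F
    exact charP_of_card_eq_prime_pow (f := m * 2)
      (by rw [← Nat.card_eq_fintype_card, hF, hm, pow_mul])
  let _ := frobeniusStarRing hm hF
  have hstar (x : F) : star x = x ^ q := rfl
  rw [show 2 * (n + 1) - 1 = 2 * n + 1 by lia, show 2 * (n + 1) - 3 = 2 * n - 1 by lia,
    show n + 1 - 2 = n - 1 by lia, Nat.add_sub_cancel]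
  refine ⟨card_bset hstar hF hn.pos.ne', fun f hf => ?_⟩
  by_cases hlast : f (Pi.single (Fin.last _) 1) = 0
  · have hcard := card_bset_inter_mem_of_apply_last_eq_zero hstar hF hn.pos.ne' (α := α) (β := β)
      hf hlast
    simp only [Set.mem_insert_iff, Set.mem_singleton_iff] at hcard ⊢
    tauto
  · have hcard := card_bset_inter_mem_of_apply_last_ne_zero hstar hm hF hn hβ htr hlast
    simp only [Set.mem_insert_iff, Set.mem_singleton_iff] at hcard ⊢
    tauto

/-- size and hyperplane intersection numbers of `B` for `q = 2^m > 2`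
even and `r ≥ 4` even, with `Tr_{GF(q)/GF(2)}(α^{q+1}/(β^q+β)²) = 0`, where the
absolute trace of `x ∈ GF(q)` is `∑_{i<m} x^{2^i}`. -/
theorem statement5 (q r m : ℕ) (hm : q = 2 ^ m) (hq2 : 2 < q)
    (hr : 4 ≤ r) (hreven : Even r)
    (F : Type) [Field F] [Fintype F] (hF : Fintype.card F = q ^ 2)
    (α β : F) (hα : α ≠ 0) (hβ : β ^ q ≠ β)
    (htr : ∑ i ∈ Finset.range m, (α ^ (q + 1) / (β ^ q + β) ^ 2) ^ 2 ^ i = 0) :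
    Nat.card ↥(Bset F q r α β) = q ^ (2 * r - 1) + ∑ i ∈ Finset.range (r - 1), q ^ (2 * i) ∧
    ∀ f : Module.Dual F (Fin (r + 1) → F), f ≠ 0 →
      Nat.card ↥(Bset F q r α β ∩ {P | f P.rep = 0}) ∈
        ({(q ^ (2 * (r - 1)) - 1) / (q ^ 2 - 1),
          q ^ (2 * r - 3) - q ^ (r - 1) + q ^ (r - 2) + (q ^ (2 * (r - 2)) - 1) / (q ^ 2 - 1),
          q ^ (2 * r - 3) + (q ^ (2 * (r - 2)) - 1) / (q ^ 2 - 1),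
          q ^ (2 * r - 3) + q ^ (r - 2) + (q ^ (2 * (r - 2)) - 1) / (q ^ 2 - 1),
          q ^ (2 * r - 3) + (q ^ (2 * (r - 1)) - 1) / (q ^ 2 - 1)} : Set ℕ) :=
  statement5_general q r m hm (by lia) hreven F (by rwa [Nat.card_eq_fintype_card]) α β hβ htr
end

section
/- Let q > 2 be a prime power, r ≥ 3, and let B be the hypersurface of PG(r,q²) defined below (with the stated conditions on α and β). Then for every line ℓ of PG(r,q²), the cardinality |ℓ ∩ B| belongs to the set {0, 1, 2, q−1, q, q+1, q+2, 2q−1, 2q, q²+1}. -/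
/-!
Let `q` be the order of the subfield `K` of `F`. As `∑ xᵢ^(q+1)` lies in `K`, the affine equation
of `B` says precisely that `α ∑ xᵢ² - β ∑ xᵢ^(q+1) + xᵣ` lies in `K`, that is, in the kernel of a
`K`-linear functional `l` on `F`. So the affine part of `B` is an affine quadric over `K`, and an
affine line with direction `w` meets it in a conic of the affine `K`-plane `F`, whose quadratic
part is `t ↦ l (a t² + c t^(q+1))` with `a = α ∑ wᵢ²`. The points of a conic are counted through
the projective zeros of its quadratic part: at most two of them if that part is nonzero, none if it
is anisotropic. If `a ≠ 0`, the form is nonzero and the point at infinity of the line is not in `B`.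
If `a = 0`, the form is a multiple of the norm, so zero or anisotropic, and the point at infinity is
in `B`. A line at infinity meets `B` in the zeros of the binary quadratic form `∑ xᵢ²`.
-/

open Module
open scoped LinearAlgebra.Projectivization

section ProjectiveZeros

variable {K V : Type*} [Field K] [AddCommGroup V] [Module K V]

/-- The points of the quadric `Q = 0` in projective space. Vanishing does not depend on the chosen
representative, see `mk_mem_projectiveZeros`. -/
def projectiveZeros (Q : QuadraticForm K V) : Set (ℙ K V) :=
  {P | Q P.rep = 0}

lemma mk_mem_projectiveZeros (Q : QuadraticForm K V) {v : V} (hv : v ≠ 0) :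
    Projectivization.mk K v hv ∈ projectiveZeros Q ↔ Q v = 0 := by
  obtain ⟨a, ha⟩ := Projectivization.exists_smul_eq_mk_rep K v hv
  simp [projectiveZeros, ← ha, Units.smul_def, QuadraticMap.map_smul]

lemma projectiveZeros_zero : projectiveZeros (0 : QuadraticForm K V) = Set.univ := by
  simp [projectiveZeros]

lemma projectiveZeros_eq_empty_of_anisotropic {Q : QuadraticForm K V}
    (hQ : Q.Anisotropic) : projectiveZeros Q = ∅ :=
  Set.eq_empty_of_forall_notMem fun P hP => P.rep_nonzero (hQ _ hP)

lemma exists_smul_rep_add_smul_rep_eq (hV : finrank K V = 2) {P P' : ℙ K V} (hne : P ≠ P')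
    (v : V) : ∃ a b : K, a • P.rep + b • P'.rep = v := by
  have hspan := (Projectivization.linearIndependent_pair_iff_ne.2
    hne).span_eq_top_of_card_eq_finrank (by simp [hV])
  rw [← Submodule.mem_span_pair, ← Matrix.range_cons_cons_empty _ _ ![], hspan]
  trivial

lemma eq_zero_of_mem_projectiveZeros (hV : finrank K V = 2) {Q : QuadraticForm K V}
    {P P' R : ℙ K V} (hP : P ∈ projectiveZeros Q) (hP' : P' ∈ projectiveZeros Q)
    (hR : R ∈ projectiveZeros Q) (hPP' : P ≠ P') (hPR : P ≠ R) (hP'R : P' ≠ R) : Q = 0 := by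
  have hQ (a b : K) : Q (a • P.rep + b • P'.rep)
      = a * b * QuadraticMap.polar Q P.rep P'.rep := by
    rw [QuadraticMap.map_add Q, QuadraticMap.map_smul, QuadraticMap.map_smul, hP, hP',
      QuadraticMap.polar_smul_left, QuadraticMap.polar_smul_right]
    simp [mul_assoc]
  obtain ⟨a, b, hab⟩ := exists_smul_rep_add_smul_rep_eq hV hPP' R.rep
  have ha : a ≠ 0 := by
    rintro rfl
    exact (LinearIndependent.pair_iff' P'.rep_nonzero).1
      (Projectivization.linearIndependent_pair_iff_ne.2 hP'R) b (by simpa using hab)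
  have hb : b ≠ 0 := by
    rintro rfl
    exact (LinearIndependent.pair_iff' P.rep_nonzero).1
      (Projectivization.linearIndependent_pair_iff_ne.2 hPR) a (by simpa using hab)
  have hpolar : QuadraticMap.polar Q P.rep P'.rep = 0 := by
    have hR : Q R.rep = 0 := hR
    rw [← hab, hQ] at hR
    exact (mul_eq_zero.1 hR).resolve_left (mul_ne_zero ha hb)
  ext v
  obtain ⟨a, b, rfl⟩ := exists_smul_rep_add_smul_rep_eq hV hPP' v
  simp [hQ, hpolar]

lemma ncard_projectiveZeros_le_two [Finite K] (hV : finrank K V = 2) {Q : QuadraticForm K V}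
    (hQ : Q ≠ 0) : (projectiveZeros Q).ncard ≤ 2 := by
  have : FiniteDimensional K V := .of_finrank_pos (by lia)
  have : Finite V := Module.finite_of_finite K
  by_contra! h
  obtain ⟨P, hP, P', hP', R, hR, hPP', hPR, hP'R⟩ := (Set.two_lt_ncard).1 h
  exact hQ (eq_zero_of_mem_projectiveZeros hV hP hP' hR hPP' hPR hP'R)

lemma existsUnique_rep_eq_zero (hV : finrank K V = 2) {f : Dual K V} (hf : f ≠ 0) :
    ∃! P : ℙ K V, f P.rep = 0 := by
  have : FiniteDimensional K V := .of_finrank_pos (by lia)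
  have hker : LinearMap.ker f ≠ ⊥ :=
    LinearMap.ker_ne_bot_of_finrank_lt (by simp [hV])
  obtain ⟨v, hv, hv0⟩ := Submodule.exists_mem_ne_zero_of_ne_bot hker
  obtain ⟨a, ha⟩ := Projectivization.exists_smul_eq_mk_rep K v hv0
  refine ⟨Projectivization.mk K v hv0, ?_, fun P hP => ?_⟩
  · simp [← ha, Units.smul_def, LinearMap.mem_ker.1 hv]
  · by_contra hne
    apply hf
    ext u
    obtain ⟨x, y, rfl⟩ := exists_smul_rep_add_smul_rep_eq hV hne u
    simp [hP, ← ha, Units.smul_def, LinearMap.mem_ker.1 hv]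

lemma bijective_units_smul_rep :
    Function.Bijective fun x : ℙ K V × Kˣ =>
      (⟨x.2 • x.1.rep, (smul_ne_zero_iff_ne x.2).2 x.1.rep_nonzero⟩ : {v : V // v ≠ 0}) := by
  constructor
  · rintro ⟨P, s⟩ ⟨P', s'⟩ h
    have h : s • P.rep = s' • P'.rep := congrArg Subtype.val h
    obtain rfl : P = P' := by
      rw [← P.mk_rep, ← P'.mk_rep, Projectivization.mk_eq_mk_iff]
      exact ⟨s⁻¹ * s', by rw [mul_smul, ← h, inv_smul_smul]⟩
    simpa [Units.smul_def, smul_left_inj P.rep_nonzero, Units.val_inj] using h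
  · rintro ⟨v, hv⟩
    obtain ⟨s, hs⟩ := Projectivization.exists_smul_eq_mk_rep K v hv
    exact ⟨(Projectivization.mk K v hv, s⁻¹), by simp [← hs]⟩

end ProjectiveZeros

section AffineQuadric

variable {K V W : Type*} [Field K] [AddCommGroup V] [Module K V] [AddCommGroup W] [Module K W]

/-- The affine quadric `Q v + f v + c = 0`; for `Q = 0` this degenerates to an affine subspace. -/
def affineQuadric (Q : QuadraticForm K V) (f : Dual K V) (c : K) : Set V :=
  {v | Q v + f v + c = 0}

lemma preimage_affineQuadric (Q : QuadraticForm K V) (f : Dual K V) (c : K) (v : V)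
    (g : W →ₗ[K] V) :
    (fun w => g w + v) ⁻¹' affineQuadric Q f c
      = affineQuadric (Q.comp g) ((f + Q.polarBilin v) ∘ₗ g) (Q v + f v + c) := by
  ext w
  simp only [affineQuadric, Set.mem_preimage, Set.mem_ofPred_eq, QuadraticMap.map_add Q (g w) v,
    map_add, QuadraticMap.comp_apply, LinearMap.comp_apply, LinearMap.add_apply,
    QuadraticMap.polarBilin_apply_apply, QuadraticMap.polar_comm Q v]
  exact Eq.congr_left (by ring)

end AffineQuadric

section AffineConic

variable {K V : Type*} [Field K] [AddCommGroup V] [Module K V]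

open Classical in
lemma card_units_mul_add_eq_zero (a b : K) :
    Nat.card {s : Kˣ // s * a + b = 0}
      = (if a = 0 ∧ b = 0 then Nat.card K - 1 else 0) + if ¬(a = 0 ∨ b = 0) then 1 else 0 := by
  by_cases ha : a = 0
  · by_cases hb : b = 0 <;> simp [ha, hb, Nat.card_units]
  by_cases hb : b = 0
  · simp [ha, hb]
  · have : Unique {s : Kˣ // s * a + b = 0} :=
      { default := ⟨Units.mk0 (-b / a) (by simp [ha, hb]), by simp [ha]⟩
        uniq := fun ⟨s, hs⟩ => by
          ext
          simp only [Units.val_mk0]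
          field_simp
          linear_combination hs }
    simp [ha, hb]

lemma units_smul_rep_mem_affineQuadric (Q : QuadraticForm K V) (f : Dual K V) (P : ℙ K V)
    (s : Kˣ) : s • P.rep ∈ affineQuadric Q f 0 ↔ s * Q P.rep + f P.rep = 0 := by
  have hfactor : Q (s • P.rep) + f (s • P.rep) + 0 = s * (s * Q P.rep + f P.rep) := by
    simp only [Units.smul_def, QuadraticMap.map_smul, map_smul, smul_eq_mul]
    ring
  rw [affineQuadric, Set.mem_ofPred_eq, hfactor, s.mul_right_eq_zero]

/-- Along the line through the origin with direction `P` the equation reads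
`s * (s * Q P.rep + f P.rep) = 0`: every nonzero `s` solves it if `P` is a zero of both `Q` and `f`,
exactly one does if `P` is a zero of neither, and none otherwise. -/
lemma ncard_affineQuadric_zero [Finite K] [Finite V] (Q : QuadraticForm K V) (f : Dual K V) :
    (affineQuadric Q f 0).ncard
      = 1 + (Nat.card K - 1) * (projectiveZeros Q ∩ {P | f P.rep = 0}).ncard
        + (projectiveZeros Q ∪ {P | f P.rep = 0})ᶜ.ncard := by
  classical
  have := Fintype.ofFinite (ℙ K V)
  have hnonzero : ↥(affineQuadric Q f 0 \ {0})
      ≃ Σ P : ℙ K V, {s : Kˣ // s * Q P.rep + f P.rep = 0} :=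
    calc ↥(affineQuadric Q f 0 \ {0})
      _ ≃ {v : {v : V // v ≠ 0} // v.1 ∈ affineQuadric Q f 0} :=
        (Equiv.subtypeEquivRight fun _ => and_comm).trans
          (Equiv.subtypeSubtypeEquivSubtypeInter _ _).symm
      _ ≃ {x : ℙ K V × Kˣ // x.2 * Q x.1.rep + f x.1.rep = 0} :=
        ((Equiv.ofBijective _ bijective_units_smul_rep).subtypeEquiv
          fun x => (units_smul_rep_mem_affineQuadric Q f x.1 x.2).symm).symm
      _ ≃ Σ P : ℙ K V, {s : Kˣ // s * Q P.rep + f P.rep = 0} :=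
        Equiv.subtypeProdEquivSigmaSubtype fun (P : ℙ K V) (s : Kˣ) => s * Q P.rep + f P.rep = 0
  have hcard (S : Set (ℙ K V)) (m : ℕ) : ∑ P, (if P ∈ S then m else 0) = m * S.ncard := by
    rw [← Finset.sum_filter, Finset.sum_const, smul_eq_mul, mul_comm, Set.ncard_eq_toFinset_card',
      Set.filter_mem_univ_eq_toFinset]
  rw [← Set.ncard_sdiff_singleton_add_one (show (0 : V) ∈ affineQuadric Q f 0 by
      simp [affineQuadric]), ← Nat.card_coe_set_eq, Nat.card_congr hnonzero, Nat.card_sigma,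
    add_comm, add_assoc, ← hcard, ← one_mul (Set.ncard _ᶜ), ← hcard, ← Finset.sum_add_distrib]
  simp only [card_units_mul_add_eq_zero, projectiveZeros, Set.mem_inter_iff, Set.mem_compl_iff,
    Set.mem_union, Set.mem_ofPred_eq]

lemma ncard_affineQuadric_zero_cases [Finite K] (hV : finrank K V = 2) (Q : QuadraticForm K V)
    (f : Dual K V) :
    (affineQuadric Q f 0).ncard = 1 + (Nat.card K - 1) * (projectiveZeros Q).ncard ∨
      (1 ≤ (projectiveZeros Q).ncard ∧
        (affineQuadric Q f 0).ncard + (projectiveZeros Q).ncard = 2 * Nat.card K + 1) ∨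
      (affineQuadric Q f 0).ncard + (projectiveZeros Q).ncard = Nat.card K + 1 := by
  have : FiniteDimensional K V := .of_finrank_pos (by lia)
  have : Finite V := Module.finite_of_finite K
  have hK : 1 < Nat.card K := Finite.one_lt_card
  rw [ncard_affineQuadric_zero]
  by_cases hf : f = 0
  · simp [hf]
  obtain ⟨P, hP, hP_unique⟩ := existsUnique_rep_eq_zero hV hf
  have hzeros : {R : ℙ K V | f R.rep = 0} = {P} :=
    Set.eq_singleton_iff_unique_mem.2 ⟨hP, hP_unique⟩
  have hcompl := Set.ncard_add_ncard_compl (projectiveZeros Q ∪ {P})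
  rw [Projectivization.card_of_finrank_two K V hV] at hcompl
  rw [hzeros]
  right
  by_cases hPQ : P ∈ projectiveZeros Q
  · have hpos : 0 < (projectiveZeros Q).ncard := (Set.ncard_pos (Set.toFinite _)).2 ⟨P, hPQ⟩
    rw [Set.union_singleton, Set.insert_eq_of_mem hPQ] at hcompl ⊢
    rw [Set.inter_eq_right.2 (Set.singleton_subset_iff.2 hPQ), Set.ncard_singleton]
    left
    lia
  · rw [Set.union_singleton, Set.ncard_insert_of_notMem hPQ] at hcompl
    rw [Set.inter_singleton_eq_empty.2 hPQ, Set.ncard_empty, Set.union_singleton]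
    right
    lia

/-- Translating a point of the conic to the origin removes the constant term. -/
lemma ncard_affineQuadric_cases [Finite K] (hV : finrank K V = 2) (Q : QuadraticForm K V)
    (f : Dual K V) (c : K) :
    (affineQuadric Q f c).ncard = 0 ∨
      (affineQuadric Q f c).ncard = 1 + (Nat.card K - 1) * (projectiveZeros Q).ncard ∨
      (1 ≤ (projectiveZeros Q).ncard ∧
        (affineQuadric Q f c).ncard + (projectiveZeros Q).ncard = 2 * Nat.card K + 1) ∨
      (affineQuadric Q f c).ncard + (projectiveZeros Q).ncard = Nat.card K + 1 := by
  rcases (affineQuadric Q f c).eq_empty_or_nonempty with hempty | ⟨v, hv⟩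
  · simp [hempty]
  right
  have htranslate : (affineQuadric Q f c).ncard
      = (affineQuadric Q (f + Q.polarBilin v) 0).ncard := by
    have hpre := preimage_affineQuadric Q f c v LinearMap.id
    rw [show Q v + f v + c = 0 from hv] at hpre
    exact (Set.ncard_preimage_of_injective_subset_range (add_left_injective v)
      (by simp [(add_right_surjective v).range_eq])).symm.trans (congrArg Set.ncard hpre)
  rw [htranslate]
  exact ncard_affineQuadric_zero_cases hV Q _

lemma ncard_affineQuadric_of_ne_zero [Finite K] (hV : finrank K V = 2) {Q : QuadraticForm K V}
    (hQ : Q ≠ 0) (f : Dual K V) (c : K) :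
    (affineQuadric Q f c).ncard ∈ ({0, 1, Nat.card K - 1, Nat.card K, Nat.card K + 1,
      2 * Nat.card K - 1, 2 * Nat.card K} : Set ℕ) := by
  have hcases := ncard_affineQuadric_cases hV Q f c
  have hz := ncard_projectiveZeros_le_two hV hQ
  generalize (projectiveZeros Q).ncard = z at hcases hz
  simp only [Set.mem_insert_iff, Set.mem_singleton_iff]
  interval_cases z <;> lia

lemma ncard_affineQuadric_of_anisotropic [Finite K] (hV : finrank K V = 2) {Q : QuadraticForm K V}
    (hQ : Q.Anisotropic) (f : Dual K V) (c : K) :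
    (affineQuadric Q f c).ncard ∈ ({0, 1, Nat.card K + 1} : Set ℕ) := by
  have hcases := ncard_affineQuadric_cases hV Q f c
  rw [projectiveZeros_eq_empty_of_anisotropic hQ, Set.ncard_empty] at hcases
  simp only [Set.mem_insert_iff, Set.mem_singleton_iff]
  lia

lemma ncard_affineQuadric_zero_form [Finite K] (hV : finrank K V = 2) (f : Dual K V) (c : K) :
    (affineQuadric 0 f c).ncard ∈ ({0, Nat.card K, Nat.card K ^ 2} : Set ℕ) := by
  have hcases := ncard_affineQuadric_cases hV 0 f c
  rw [projectiveZeros_zero, Set.ncard_univ, Projectivization.card_of_finrank_two K V hV] at hcases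
  have hsq : 1 + (Nat.card K - 1) * (Nat.card K + 1) = Nat.card K ^ 2 := by
    obtain ⟨n, hn⟩ := Nat.exists_eq_add_of_le' (Nat.card_pos (α := K))
    rw [hn, Nat.add_sub_cancel]
    ring
  simp only [Set.mem_insert_iff, Set.mem_singleton_iff]
  lia

end AffineConic

section QuadraticExtension

lemma exists_subfield_natCard_eq {F : Type*} [Field F] [Finite F] {q n : ℕ} (hn : n ≠ 0)
    (hF : Nat.card F = q ^ n) : ∃ K : Subfield F, Nat.card K = q := by
  have := Fintype.ofFinite F
  obtain ⟨p, k, hp, hk, rfl⟩ := (isPrimePow_nat_iff q).1 ((isPrimePow_pow_iff hn).1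
    (hF ▸ Nat.card_eq_fintype_card (α := F) ▸ FiniteField.isPrimePow_card F))
  rw [← pow_mul] at hF
  have : Fact p.Prime := ⟨hp⟩
  have : CharP F p := charP_of_card_eq_prime_pow (Fintype.card_eq_nat_card.trans hF)
  let : Algebra (ZMod p) F := ZMod.algebra F p
  have hdvd : finrank (ZMod p) (GaloisField p k) ∣ finrank (ZMod p) F := by
    rw [← FiniteField.pow_finrank_eq_natCard p] at hF
    rw [GaloisField.finrank p hk.ne', Nat.pow_right_injective hp.two_le hF]
    exact dvd_mul_right k n
  obtain ⟨g⟩ := FiniteField.nonempty_algHom_of_finrank_dvd hdvd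
  refine ⟨g.toRingHom.fieldRange, ?_⟩
  rw [← GaloisField.card p k hk.ne']
  exact (Nat.card_congr (Equiv.ofInjective g g.injective)).symm

variable {K F : Type*} [Field K] [Fintype K] [Field F] [Algebra K F]

lemma pow_card_pow_card (hKF : finrank K F = 2) (x : F) :
    (x ^ Fintype.card K) ^ Fintype.card K = x := by
  have : FiniteDimensional K F := .of_finrank_pos (by lia)
  have : Finite F := Module.finite_of_finite K
  have := Fintype.ofFinite F
  rw [← pow_mul, ← sq, ← hKF, ← card_eq_pow_finrank, FiniteField.pow_card]

lemma exists_pow_card_ne (hKF : finrank K F = 2) : ∃ x : F, x ^ Fintype.card K ≠ x := by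
  have : FiniteDimensional K F := .of_finrank_pos (by lia)
  have : Finite F := Module.finite_of_finite K
  by_contra! h
  have hfrob : FiniteField.frobeniusAlgHom K F = 1 := AlgHom.ext h
  have := FiniteField.orderOf_frobeniusAlgHom K F
  rw [hfrob, orderOf_one, hKF] at this
  lia

lemma algebraMap_norm_eq_pow_card_add_one (hKF : finrank K F = 2) (x : F) :
    algebraMap K F (Algebra.norm K x) = x ^ (Fintype.card K + 1) := by
  have : FiniteDimensional K F := .of_finrank_pos (by lia)
  have : Finite F := Module.finite_of_finite K
  have hsub : 0 < Fintype.card K - 1 := Nat.sub_pos_of_lt Fintype.one_lt_card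
  rw [FiniteField.algebraMap_norm_eq_pow, natCard_eq_pow_finrank (K := K), hKF,
    Nat.card_eq_fintype_card, ← one_pow 2, Nat.sq_sub_sq, one_pow, Nat.mul_div_cancel _ hsub]

lemma exists_dual_eq_zero_iff_pow_card_eq (hKF : finrank K F = 2) :
    ∃ l : Dual K F, ∀ x, l x = 0 ↔ x ^ Fintype.card K = x := by
  have : FiniteDimensional K F := .of_finrank_pos (by lia)
  let D : F →ₗ[K] F := (FiniteField.frobeniusAlgHom K F).toLinearMap - LinearMap.id
  have hD (x : F) : D x = 0 ↔ x ^ Fintype.card K = x := by simp [D, sub_eq_zero]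
  obtain ⟨t, ht⟩ := exists_pow_card_ne (F := F) hKF
  have hrange : 0 < finrank K (LinearMap.range D) :=
    finrank_pos_iff_exists_ne_zero.2 ⟨⟨D t, t, rfl⟩, by simp [Subtype.ext_iff, hD, ht]⟩
  have hker : 0 < finrank K (LinearMap.ker D) :=
    finrank_pos_iff_exists_ne_zero.2 ⟨⟨1, by simp [hD]⟩, by simp [Subtype.ext_iff]⟩
  have hrange_one : finrank K (LinearMap.range D) = finrank K K := by
    rw [finrank_self]
    have := D.finrank_range_add_finrank_ker
    lia
  let e := LinearEquiv.ofFinrankEq _ _ hrange_one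
  exact ⟨e.toLinearMap ∘ₗ D.rangeRestrict, fun x => by simp [← hD, Subtype.ext_iff]⟩

variable (K) in
/-- The quadratic map `t ↦ a t² + c t^(q+1)` on `F` over its subfield `K` of order `q`, where
`t ^ q` is the image of `t` under the Frobenius map of `F` over `K`. -/
def sqAddNorm (a c : F) : QuadraticMap K F F :=
  a • QuadraticMap.sq +
    c • QuadraticMap.linMulLin (FiniteField.frobeniusAlgHom K F).toLinearMap LinearMap.id

lemma sqAddNorm_apply (a c t : F) :
    sqAddNorm K a c t = a * t ^ 2 + c * t ^ (Fintype.card K + 1) := by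
  simp [sqAddNorm, pow_succ]

lemma mul_pow_card_eq_neg_mul (hKF : finrank K F = 2) {l : Dual K F}
    (hl : ∀ x, l x = 0 ↔ x ^ Fintype.card K = x) {a c : F}
    (h : l.compQuadraticMap (sqAddNorm K a c) = 0) {t : F} (ht : t ^ Fintype.card K ≠ t) :
    (a * t) ^ Fintype.card K = -(a * t) := by
  have hvanish (x : F) : l (a * x ^ 2) + Algebra.norm K x * l c = 0 := by
    have hx : l (a * x ^ 2 + c * x ^ (Fintype.card K + 1)) = 0 := by
      rw [← sqAddNorm_apply]
      exact DFunLike.congr_fun h x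
    rwa [← algebraMap_norm_eq_pow_card_add_one hKF, mul_comm c, ← Algebra.smul_def, map_add,
      map_smul, smul_eq_mul] at hx
  have hl_t : l (a * t * (t - t ^ Fintype.card K)) = 0 := by
    have hsplit : a * t * (t - t ^ Fintype.card K) = a * t ^ 2 - Algebra.norm K t • a := by
      rw [Algebra.smul_def, algebraMap_norm_eq_pow_card_add_one hKF]
      ring
    have hone := hvanish 1
    rw [map_one, one_mul, one_pow, mul_one] at hone
    rw [hsplit, map_sub, map_smul, smul_eq_mul]
    linear_combination hvanish t - Algebra.norm K t * hone
  have hsub : (t - t ^ Fintype.card K) ^ Fintype.card K = t ^ Fintype.card K - t := by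
    simpa only [FiniteField.frobeniusAlgHom_apply, pow_card_pow_card hKF]
      using map_sub (FiniteField.frobeniusAlgHom K F) t (t ^ Fintype.card K)
  have hfixed := (hl _).1 hl_t
  rw [mul_pow, hsub] at hfixed
  exact mul_right_cancel₀ (sub_ne_zero.2 ht) (by linear_combination hfixed)

/-- If the form vanished, `t ↦ a t` would be anti-invariant under Frobenius off `K`, in particular
at some `t` and at `t + 1`. -/
lemma compQuadraticMap_sqAddNorm_ne_zero (hKF : finrank K F = 2) {l : Dual K F}
    (hl : ∀ x, l x = 0 ↔ x ^ Fintype.card K = x) {a : F} (ha : a ≠ 0) (c : F) :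
    l.compQuadraticMap (sqAddNorm K a c) ≠ 0 := by
  intro h
  obtain ⟨t, ht⟩ := exists_pow_card_ne (F := F) hKF
  have hadd : (t + 1) ^ Fintype.card K = t ^ Fintype.card K + 1 := by
    simpa using map_add (FiniteField.frobeniusAlgHom K F) t 1
  have h_t := mul_pow_card_eq_neg_mul hKF hl h ht
  have h_add := mul_pow_card_eq_neg_mul hKF hl h (t := t + 1) (by simpa [hadd] using ht)
  rw [mul_pow] at h_t h_add
  rw [hadd] at h_add
  have ha' : a ^ Fintype.card K = -a := by linear_combination h_add - h_t
  rw [ha'] at h_t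
  exact ht (mul_left_cancel₀ ha (by linear_combination -h_t))

lemma compQuadraticMap_sqAddNorm_zero_left (hKF : finrank K F = 2) (l : Dual K F) (c : F) :
    l.compQuadraticMap (sqAddNorm K 0 c) = 0 ∨
      (l.compQuadraticMap (sqAddNorm K 0 c)).Anisotropic := by
  have hnorm (t : F) :
      l.compQuadraticMap (sqAddNorm K 0 c) t = Algebra.norm K t * l c := by
    rw [LinearMap.compQuadraticMap_apply, sqAddNorm_apply,
      ← algebraMap_norm_eq_pow_card_add_one hKF, zero_mul, zero_add, mul_comm c,
      ← Algebra.smul_def, map_smul, smul_eq_mul]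
  have : FiniteDimensional K F := .of_finrank_pos (by lia)
  by_cases hc : l c = 0
  · left
    ext t
    simp [hnorm, hc]
  · right
    intro t ht
    simpa [hnorm, hc] using ht

end QuadraticExtension

section AffineEquation

variable {K F ι : Type*} [Field K] [Fintype K] [Field F] [Algebra K F]

variable (K) in
/-- The quadratic map `x ↦ a ∑ i ∈ s, xᵢ² + c ∑ i ∈ s, xᵢ^(q+1)` over the subfield `K` of order
`q`. -/
def sumSqAddNorm (s : Finset ι) (a c : F) : QuadraticMap K (ι → F) F :=
  ∑ i ∈ s, (sqAddNorm K a c).comp (LinearMap.proj i)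

lemma sumSqAddNorm_apply (s : Finset ι) (a c : F) (x : ι → F) :
    sumSqAddNorm K s a c x
      = a * ∑ i ∈ s, x i ^ 2 + c * ∑ i ∈ s, x i ^ (Fintype.card K + 1) := by
  simp [sumSqAddNorm, sqAddNorm_apply, Finset.sum_add_distrib, Finset.mul_sum]

lemma sumSqAddNorm_comp_toSpanSingleton (s : Finset ι) (a c : F) (w : ι → F) :
    (sumSqAddNorm K s a c).comp ((LinearMap.toSpanSingleton F (ι → F) w).restrictScalars K)
      = sqAddNorm K (a * ∑ i ∈ s, w i ^ 2) (c * ∑ i ∈ s, w i ^ (Fintype.card K + 1)) := by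
  ext t
  simp only [QuadraticMap.comp_apply, sumSqAddNorm_apply, sqAddNorm_apply,
    LinearMap.restrictScalars_apply, LinearMap.toSpanSingleton_apply, Pi.smul_apply, smul_eq_mul,
    mul_pow, ← Finset.mul_sum]
  ring

/-- The indices `1, …, r - 1` of the coordinates that enter the equations of `Bset` through their
squares. -/
def middleCoords (r : ℕ) : Finset (Fin (r + 1)) :=
  {i | 1 ≤ i.1 ∧ i.1 < r}

/-- As Frobenius fixes `∑ xᵢ^(q+1)`, the equation `affEq` says that it also fixes
`α ∑ xᵢ² - β ∑ xᵢ^(q+1) + xᵣ`. -/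
lemma affEq_iff_mem_affineQuadric (hKF : finrank K F = 2) {l : Dual K F}
    (hl : ∀ x, l x = 0 ↔ x ^ Fintype.card K = x) {r : ℕ} {α β : F} {x : Fin (r + 1) → F} :
    affEq (Fintype.card K) r α β x ↔
      x ∈ affineQuadric (l.compQuadraticMap (sumSqAddNorm K (middleCoords r) α (-β)))
        (l ∘ₗ LinearMap.proj (Fin.last r)) 0 := by
  have hfrob_sq : (∑ i ∈ middleCoords r, x i ^ 2) ^ Fintype.card K
      = ∑ i ∈ middleCoords r, x i ^ (2 * Fintype.card K) := by
    simp_rw [pow_mul]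
    exact map_sum (FiniteField.frobeniusAlgHom K F) (fun i => x i ^ 2) (middleCoords r)
  have hfrob_norm : (∑ i ∈ middleCoords r, x i ^ (Fintype.card K + 1)) ^ Fintype.card K
      = ∑ i ∈ middleCoords r, x i ^ (Fintype.card K + 1) := by
    simp_rw [← algebraMap_norm_eq_pow_card_add_one hKF, ← map_sum, ← map_pow, FiniteField.pow_card]
  have hfrob : (α * ∑ i ∈ middleCoords r, x i ^ 2
        + -β * ∑ i ∈ middleCoords r, x i ^ (Fintype.card K + 1) + x (Fin.last r)) ^ Fintype.card K
      = α ^ Fintype.card K * ∑ i ∈ middleCoords r, x i ^ (2 * Fintype.card K)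
        + -β ^ Fintype.card K * ∑ i ∈ middleCoords r, x i ^ (Fintype.card K + 1)
        + x (Fin.last r) ^ Fintype.card K := by
    simp only [← FiniteField.frobeniusAlgHom_apply K F, map_add, map_mul, map_neg]
    simp only [FiniteField.frobeniusAlgHom_apply, hfrob_sq, hfrob_norm]
  rw [affineQuadric, Set.mem_ofPred_eq, LinearMap.compQuadraticMap_apply, LinearMap.comp_apply,
    LinearMap.proj_apply, ← map_add, add_zero, sumSqAddNorm_apply, hl, hfrob, affEq]
  simp only [← Finset.sum_filter]
  rw [← sub_eq_zero, ← sub_eq_zero (b := α * _ + _ + _)]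
  refine Eq.congr_left ?_
  simp only [middleCoords]
  ring

lemma exists_setOf_affEq_smul_add_eq_affineQuadric (hKF : finrank K F = 2) {l : Dual K F}
    (hl : ∀ x, l x = 0 ↔ x ^ Fintype.card K = x) {r : ℕ} (α β : F) (w v : Fin (r + 1) → F) :
    ∃ (f : Dual K F) (c : K), {t : F | affEq (Fintype.card K) r α β (t • w + v)}
      = affineQuadric (l.compQuadraticMap (sqAddNorm K (α * ∑ i ∈ middleCoords r, w i ^ 2)
          (-β * ∑ i ∈ middleCoords r, w i ^ (Fintype.card K + 1)))) f c := by
  rw [← sumSqAddNorm_comp_toSpanSingleton]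
  refine ⟨_, _, Eq.trans ?_ (preimage_affineQuadric
    (l.compQuadraticMap (sumSqAddNorm K (middleCoords r) α (-β)))
    (l ∘ₗ LinearMap.proj (Fin.last r)) 0 v
    ((LinearMap.toSpanSingleton F _ w).restrictScalars K))⟩
  ext t
  exact affEq_iff_mem_affineQuadric hKF hl

lemma ncard_setOf_affEq_smul_add_of_ne_zero (hKF : finrank K F = 2) {r : ℕ} {α : F} (hα : α ≠ 0)
    (β : F) {w : Fin (r + 1) → F} (hw : ∑ i ∈ middleCoords r, w i ^ 2 ≠ 0) (v : Fin (r + 1) → F) :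
    {t : F | affEq (Fintype.card K) r α β (t • w + v)}.ncard ∈ ({0, 1, Fintype.card K - 1,
      Fintype.card K, Fintype.card K + 1, 2 * Fintype.card K - 1, 2 * Fintype.card K} : Set ℕ) := by
  obtain ⟨l, hl⟩ := exists_dual_eq_zero_iff_pow_card_eq (F := F) hKF
  obtain ⟨f, c, hsection⟩ := exists_setOf_affEq_smul_add_eq_affineQuadric hKF hl α β w v
  rw [hsection, ← Nat.card_eq_fintype_card]
  exact ncard_affineQuadric_of_ne_zero hKF
    (compQuadraticMap_sqAddNorm_ne_zero hKF hl (mul_ne_zero hα hw) _) f c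

lemma ncard_setOf_affEq_smul_add_of_eq_zero (hKF : finrank K F = 2) {r : ℕ} (α β : F)
    {w : Fin (r + 1) → F} (hw : ∑ i ∈ middleCoords r, w i ^ 2 = 0) (v : Fin (r + 1) → F) :
    {t : F | affEq (Fintype.card K) r α β (t • w + v)}.ncard ∈ ({0, 1, Fintype.card K,
      Fintype.card K + 1, Fintype.card K ^ 2} : Set ℕ) := by
  obtain ⟨l, hl⟩ := exists_dual_eq_zero_iff_pow_card_eq (F := F) hKF
  obtain ⟨f, c, hsection⟩ := exists_setOf_affEq_smul_add_eq_affineQuadric hKF hl α β w v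
  rw [hsection, hw, mul_zero, ← Nat.card_eq_fintype_card]
  rcases compQuadraticMap_sqAddNorm_zero_left hKF l
    (-β * ∑ i ∈ middleCoords r, w i ^ (Nat.card K + 1)) with hzero | hanisotropic
  · have := ncard_affineQuadric_zero_form hKF f c
    grind
  · have := ncard_affineQuadric_of_anisotropic hKF hanisotropic f c
    grind

end AffineEquation

section LineSections

variable {F V E : Type*} [Field F] [AddCommGroup V] [Module F V] [AddCommGroup E] [Module F E]

lemma range_projectivization_map (g : E →ₗ[F] V) (hg : Function.Injective g) :
    Set.range (Projectivization.map g hg) = {P | P.rep ∈ LinearMap.range g} := by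
  ext P
  constructor
  · rintro ⟨R, rfl⟩
    induction R with | h e he =>
    obtain ⟨a, ha⟩ := Projectivization.exists_smul_eq_mk_rep F (g e)
      ((map_ne_zero_iff g hg).2 he)
    exact ⟨a • e, by simp [← ha, Projectivization.map_mk, Units.smul_def]⟩
  · rintro ⟨e, he⟩
    have he0 : e ≠ 0 := by
      rintro rfl
      exact P.rep_nonzero (by simp [← he])
    refine ⟨Projectivization.mk F e he0, ?_⟩
    rw [Projectivization.map_mk, ← P.mk_rep]
    simp [he]

lemma ncard_preimage_projectivization_map (g : E →ₗ[F] V) (hg : Function.Injective g)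
    (S : Set (ℙ F V)) :
    (Projectivization.map g hg ⁻¹' S).ncard = (S ∩ {P | P.rep ∈ LinearMap.range g}).ncard := by
  rw [← range_projectivization_map g hg, ← Set.image_preimage_eq_inter_range,
    Set.ncard_image_of_injective _ (Projectivization.map_injective g hg)]

open Classical in
lemma ncard_onePoint {X : Type*} [Finite X] (T : Set (OnePoint X)) :
    T.ncard = {x : X | (x : OnePoint X) ∈ T}.ncard + if OnePoint.infty ∈ T then 1 else 0 := by
  have himage : ((↑) '' {x : X | (x : OnePoint X) ∈ T} : Set (OnePoint X))
      = T \ {OnePoint.infty} := by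
    ext y
    cases y <;> simp
  have : Finite (OnePoint X) := inferInstanceAs (Finite (Option X))
  rw [← Set.ncard_image_of_injective _ (OnePoint.coe_injective (X := X)), himage]
  split_ifs with hinfty
  · rw [Set.ncard_sdiff_singleton_add_one hinfty]
  · rw [Set.sdiff_singleton_eq_self hinfty, add_zero]

open Classical in
lemma ncard_inter_rep_mem_span_pair [Finite F] {w v : V} (hw : w ≠ 0)
    (hv : ∀ t : F, t • w + v ≠ 0) (S : Set (ℙ F V)) :
    (S ∩ {P | P.rep ∈ Submodule.span F {w, v}}).ncard
      = {t : F | Projectivization.mk F (t • w + v) (hv t) ∈ S}.ncard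
        + if Projectivization.mk F w hw ∈ S then 1 else 0 := by
  let g : (Fin 2 → F) →ₗ[F] V := Fintype.linearCombination F ![w, v]
  have hrange : LinearMap.range g = Submodule.span F {w, v} := by
    rw [Fintype.range_linearCombination, Matrix.range_cons_cons_empty]
  have hg : Function.Injective g := by
    rw [← linearIndependent_iff_injective_fintypeLinearCombination, LinearIndependent.pair_iff' hw]
    intro t ht
    exact hv (-t) (by simp [ht])
  rw [← hrange, ← ncard_preimage_projectivization_map g hg,
    ← Set.ncard_preimage_of_injective_subset_range (OnePoint.equivProjectivization F).injective
      (by simp), ncard_onePoint]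
  simp [Projectivization.map_mk, g, Fintype.linearCombination_apply]

lemma exists_span_pair_eq_of_finrank_eq_two {L : Submodule F V} (hL : finrank F L = 2)
    {f : Dual F V} (hf : ¬L ≤ LinearMap.ker f) :
    ∃ w v : V, w ≠ 0 ∧ f w = 0 ∧ f v = 1 ∧ Submodule.span F {w, v} = L := by
  have : FiniteDimensional F L := .of_finrank_pos (by lia)
  obtain ⟨u, hu, hfu⟩ := SetLike.not_le_iff_exists.1 hf
  have hker : LinearMap.ker (f.domRestrict L) ≠ ⊥ :=
    LinearMap.ker_ne_bot_of_finrank_lt (by simp [hL])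
  obtain ⟨⟨w, hwL⟩, hfw, hw⟩ := Submodule.exists_mem_ne_zero_of_ne_bot hker
  have hfw : f w = 0 := hfw
  have hw : w ≠ 0 := fun h => hw (Subtype.ext h)
  have hfv : f ((f u)⁻¹ • u) = 1 := by
    rw [map_smul, smul_eq_mul, inv_mul_cancel₀ hfu]
  refine ⟨w, (f u)⁻¹ • u, hw, hfw, hfv, ?_⟩
  have hindep : LinearIndependent F ![w, (f u)⁻¹ • u] := by
    rw [LinearIndependent.pair_iff' hw]
    intro t ht
    simpa [hfw, hfv] using congrArg f ht
  apply Submodule.eq_of_le_of_finrank_eq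
  · exact Submodule.span_le.2 (Set.pair_subset hwL (L.smul_mem _ hu))
  · rw [hL, ← Matrix.range_cons_cons_empty, finrank_span_eq_card hindep, Fintype.card_fin]

end LineSections

section LineSectionsOfBset

variable {F : Type*} [Field F] {q r : ℕ} {α β : F}

lemma mk_mem_Bset_of_apply_zero_eq_zero {x : Fin (r + 1) → F} (hx : x ≠ 0) (hx0 : x 0 = 0) :
    Projectivization.mk F x hx ∈ Bset F q r α β ↔ ∑ i ∈ middleCoords r, x i ^ 2 = 0 := by
  obtain ⟨a, ha⟩ := Projectivization.exists_smul_eq_mk_rep F x hx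
  simp [Bset, ← ha, Units.smul_def, hx0, mul_pow, middleCoords, ← Finset.sum_filter,
    ← Finset.mul_sum]

lemma mk_mem_Bset_of_apply_zero_eq_one {x : Fin (r + 1) → F} (hx : x ≠ 0) (hx0 : x 0 = 1) :
    Projectivization.mk F x hx ∈ Bset F q r α β ↔ affEq q r α β x := by
  obtain ⟨a, ha⟩ := Projectivization.exists_smul_eq_mk_rep F x hx
  simp [Bset, ← ha, Units.smul_def, hx0]

variable [Finite F]

lemma ncard_Bset_inter_of_le_ker {L : Submodule F (Fin (r + 1) → F)} (hL : finrank F L = 2)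
    (hL0 : L ≤ LinearMap.ker (LinearMap.proj 0)) :
    (Bset F q r α β ∩ {P | P.rep ∈ L}).ncard ≤ 2 ∨
      (Bset F q r α β ∩ {P | P.rep ∈ L}).ncard = Nat.card F + 1 := by
  let Q : QuadraticForm F L :=
    (∑ i ∈ middleCoords r, QuadraticMap.sq.comp (LinearMap.proj i)).comp L.subtype
  have hzeros : Projectivization.map L.subtype L.injective_subtype ⁻¹' Bset F q r α β
      = projectiveZeros Q := by
    ext R
    induction R with | h e he =>
    rw [mk_mem_projectiveZeros]
    refine (mk_mem_Bset_of_apply_zero_eq_zero _ (hL0 e.2)).trans ?_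
    simp [Q, sq]
  have hcount := ncard_preimage_projectivization_map L.subtype L.injective_subtype
    (Bset F q r α β)
  rw [L.range_subtype, hzeros] at hcount
  rw [← hcount]
  by_cases hQ : Q = 0
  · right
    rw [hQ, projectiveZeros_zero, Set.ncard_univ, Projectivization.card_of_finrank_two F L hL]
  · exact .inl (ncard_projectiveZeros_le_two hL hQ)

open Classical in
lemma ncard_Bset_inter_of_not_le_ker {L : Submodule F (Fin (r + 1) → F)} (hL : finrank F L = 2)
    (hL0 : ¬L ≤ LinearMap.ker (LinearMap.proj 0)) :
    ∃ w v : Fin (r + 1) → F, (Bset F q r α β ∩ {P | P.rep ∈ L}).ncard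
      = {t : F | affEq q r α β (t • w + v)}.ncard
        + if ∑ i ∈ middleCoords r, w i ^ 2 = 0 then 1 else 0 := by
  obtain ⟨w, v, hw, hw0, hv0, rfl⟩ := exists_span_pair_eq_of_finrank_eq_two hL hL0
  have hline (t : F) : (t • w + v) 0 = 1 := by
    have hw0 : w 0 = 0 := hw0
    have hv0 : v 0 = 1 := hv0
    simp [hw0, hv0]
  have hne (t : F) : t • w + v ≠ 0 := fun h => by simpa [h, -Pi.add_apply] using hline t
  refine ⟨w, v, ?_⟩
  rw [ncard_inter_rep_mem_span_pair hw hne]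
  simp only [mk_mem_Bset_of_apply_zero_eq_zero hw hw0,
    mk_mem_Bset_of_apply_zero_eq_one (hne _) (hline _)]

end LineSectionsOfBset

theorem statement6_general (q r : ℕ) (F : Type*) [Field F] [Finite F] (hF : Nat.card F = q ^ 2)
    (α β : F) (hα : α ≠ 0) (L : Submodule F (Fin (r + 1) → F)) (hL : finrank F L = 2) :
    Nat.card ↥(Bset F q r α β ∩ {P | P.rep ∈ L}) ∈
      ({0, 1, 2, q - 1, q, q + 1, q + 2, 2 * q - 1, 2 * q, q ^ 2 + 1} : Set ℕ) := by
  obtain ⟨K, hK⟩ := exists_subfield_natCard_eq two_ne_zero hF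
  have hKF : finrank K F = 2 := by
    rw [natCard_eq_pow_finrank (K := K), hK] at hF
    exact Nat.pow_right_injective (hK ▸ Finite.one_lt_card) hF
  have := Fintype.ofFinite K
  rw [Nat.card_eq_fintype_card] at hK
  subst hK
  rw [Nat.card_coe_set_eq]
  by_cases hL0 : L ≤ LinearMap.ker (LinearMap.proj 0)
  · have hcount := ncard_Bset_inter_of_le_ker (q := Fintype.card K) (α := α) (β := β) hL hL0
    simp only [Set.mem_insert_iff, Set.mem_singleton_iff]
    lia
  obtain ⟨w, v, hcount⟩ := ncard_Bset_inter_of_not_le_ker hL hL0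
  rw [hcount]
  split_ifs with hw
  · have hsection := ncard_setOf_affEq_smul_add_of_eq_zero hKF α β hw v
    simp only [Set.mem_insert_iff, Set.mem_singleton_iff] at hsection ⊢
    lia
  · have hsection := ncard_setOf_affEq_smul_add_of_ne_zero hKF hα β hw v
    simp only [Set.mem_insert_iff, Set.mem_singleton_iff] at hsection ⊢
    lia

/-- line sections of `B`.  For every line `ℓ` of `PG(r,q²)` (the
projectivization of a 2-dimensional subspace), `|ℓ ∩ B|` lies in
`{0, 1, 2, q−1, q, q+1, q+2, 2q−1, 2q, q²+1}`. -/
theorem statement6 (q r : ℕ) (hq : IsPrimePow q) (hq2 : 2 < q) (hr : 3 ≤ r)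
    (F : Type) [Field F] [Fintype F] (hF : Fintype.card F = q ^ 2)
    (α β : F) (hα : α ≠ 0) (hβ : β ^ q ≠ β)
    (hcond :
      (Odd q ∧ ((Odd r ∧ 4 * α ^ (q + 1) + (β ^ q - β) ^ 2 ≠ 0) ∨
        (Even r ∧ ∀ t : F, t ^ q = t → t ^ 2 ≠ 4 * α ^ (q + 1) + (β ^ q - β) ^ 2))) ∨
      (Even q ∧ (Odd r ∨ (Even r ∧ ∀ m : ℕ, q = 2 ^ m →
        ∑ i ∈ Finset.range m, (α ^ (q + 1) / (β ^ q + β) ^ 2) ^ 2 ^ i = 0))))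
    (L : Submodule F (Fin (r + 1) → F)) (hL : Module.finrank F L = 2) :
    Nat.card ↥(Bset F q r α β ∩ {P | P.rep ∈ L}) ∈
      ({0, 1, 2, q - 1, q, q + 1, q + 2, 2 * q - 1, 2 * q, q ^ 2 + 1} : Set ℕ) := by
  exact statement6_general q r F (by rwa [Nat.card_eq_fintype_card]) α β hα L hL
end

section
/- Let q be an odd prime power, r > 3, and let B be the hypersurface of PG(r,q²) defined below (with the stated conditions on α and β). Then the projective code C(B) is q-divisible: for every hyperplane Σ of PG(r,q²), q divides |B| − |B ∩ Σ| (equivalently, every weight of C(B) is divisible by q). -/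
/-!
Normalising `f v = 1` turns the weight of `f` into the number of such vectors `v` on the cone over
`B`. An affine point lies on `B` if and only if `x_r + α ∑ x_i² - β ∑ x_i^(q+1)` lies in `GF(q)`.
Since `-1` is a sum of two squares in the prime field and there are at least three middle
coordinates, the hyperplanes `f = 0` and `X₀ = 0` share a nonzero vector `w` whose middle
coordinates lie in the prime field and have squares summing to zero. Along a line of direction `w`
the above expression changes by an additive function of the parameter. So the parameters of the
points of `B` on the line are either none or form a coset of the preimage of `GF(q)` under an
additive endomorphism of `GF(q²)`. The order of that preimage divides the prime power `q²` and is at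
least `q`, hence is divisible by `q`.

At infinity, `f`, `X₀` and the polar form of `w` impose three conditions on a space of dimension
`r + 1 > 4`, so they have a common zero `z` independent of `w`. On a coset of the plane `⟨w, z⟩` the
quadric at infinity is affine in the `w`-coordinate, with constant slope, and so contains a
multiple of `q²` vectors of the coset.
-/

section Counting

theorem dvd_card_of_forall_dvd_card_fiber {U V : Type*} [AddGroup U] [AddGroup V] [Finite V]
    {n : ℕ} {S : Set V} (j : U →+ V) (hj : Function.Injective j)
    (h : ∀ v, n ∣ Nat.card {u | v + j u ∈ S}) : n ∣ Nat.card S := by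
  classical
  have := Fintype.ofFinite (V ⧸ j.range)
  rw [← Nat.card_congr (Equiv.sigmaFiberEquiv fun s : S => (s : V ⧸ j.range)), Nat.card_sigma]
  refine Finset.dvd_sum fun c _ => ?_
  obtain ⟨v, rfl⟩ := QuotientAddGroup.mk_surjective c
  refine (h v).trans (dvd_of_eq (Nat.card_congr (Equiv.ofBijective
    (fun u => ⟨⟨v + j u.1, u.2⟩, (QuotientAddGroup.eq.2 (by simp)).symm⟩) ⟨?_, ?_⟩)))
  · intro u u' huu'
    exact Subtype.ext (hj (add_left_cancel (congrArg (fun s => s.1.1) huu')))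
  · rintro ⟨⟨s, hs⟩, hsv⟩
    obtain ⟨u, hu⟩ := QuotientAddGroup.eq.1 hsv.symm
    have hvu : v + j u = s := by rw [hu, add_neg_cancel_left]
    exact ⟨⟨u, by rwa [Set.mem_ofPred_eq, hvu]⟩, Subtype.ext (Subtype.ext hvu)⟩

theorem dvd_of_isPrimePow_of_dvd_pow_of_le {q d m : ℕ} (hq : IsPrimePow q) (hd : d ∣ q ^ m)
    (hqd : q ≤ d) : q ∣ d := by
  obtain ⟨p, n, hp, -, rfl⟩ := hq
  rw [← pow_mul] at hd
  obtain ⟨k, -, rfl⟩ := (Nat.dvd_prime_pow hp.nat_prime).1 hd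
  exact pow_dvd_pow p ((Nat.pow_le_pow_iff_right hp.nat_prime.one_lt).1 hqd)

theorem card_pow_eq_neg_le {R : Type*} [CommRing R] [IsDomain R] {q : ℕ} (hq : 1 < q) :
    Nat.card {x : R | x ^ q = -x} ≤ q := by
  classical
  have hX : (Polynomial.X : Polynomial R).degree < q := by
    rw [Polynomial.degree_X]
    exact_mod_cast hq
  have hne := (Polynomial.monic_X_pow_add hX).ne_zero
  have hroots : {x : R | x ^ q = -x} =
      (Polynomial.X ^ q + Polynomial.X : Polynomial R).roots.toFinset := by
    ext x
    simp [hne, add_eq_zero_iff_eq_neg]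
  rw [hroots, Nat.card_coe_set_eq, Set.ncard_coe_finset]
  refine (Multiset.toFinset_card_le _).trans ((Polynomial.card_roots' _).trans ?_)
  compute_degree!
  exact hq.le

variable {F : Type*} [Field F]

theorem card_dvd_card_add_mul_eq_zero (g : F → F) (m : F) :
    Nat.card F ∣ Nat.card {x : F × F | g x.2 + x.1 * m = 0} := by
  obtain rfl | hm := eq_or_ne m 0
  · have hprod : {x : F × F | g x.2 + x.1 * 0 = 0} = Set.univ ×ˢ {b | g b = 0} := by
      ext; simp
    rw [hprod, Nat.card_coe_set_eq, Set.ncard_prod, Set.ncard_univ]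
    exact dvd_mul_right _ _
  · refine dvd_of_eq (Nat.card_congr (Equiv.ofBijective
      (fun b => ⟨(-g b / m, b), by simp [hm]⟩) ⟨?_, ?_⟩))
    · intro b b' h
      exact congrArg (fun x => x.1.2) h
    · rintro ⟨⟨a, b⟩, hab⟩
      refine ⟨b, Subtype.ext (Prod.ext ?_ rfl)⟩
      rw [div_eq_iff hm]
      exact (eq_neg_of_add_eq_zero_right hab).symm

variable [Finite F]

theorem frobenius_involutive_of_card_eq_sq {q : ℕ} (hF : Nat.card F = q ^ 2) {σ : F →+* F}
    (hσ : ∀ x, σ x = x ^ q) : Function.Involutive σ := by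
  have := Fintype.ofFinite F
  intro x
  rw [hσ, hσ, ← pow_mul, ← sq, ← hF, Nat.card_eq_fintype_card, FiniteField.pow_card]

theorem dvd_card_ker_frobenius_sub_id_comp {q : ℕ} (hq : IsPrimePow q) (hF : Nat.card F = q ^ 2)
    {σ : F →+* F} (hσ : ∀ x, σ x = x ^ q) (g : F →+ F) :
    q ∣ Nat.card ((σ.toAddMonoidHom - AddMonoidHom.id F).comp g).ker := by
  set D := (σ.toAddMonoidHom - AddMonoidHom.id F).comp g
  have hD (x : F) : D x ^ q = -D x := by
    rw [← hσ]
    simp [D, frobenius_involutive_of_card_eq_sq hF hσ (g x)]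
  have hrange : Nat.card D.range ≤ q := by
    refine le_trans (Nat.card_mono (Set.toFinite _) ?_) (card_pow_eq_neg_le hq.one_lt (R := F))
    rintro _ ⟨x, rfl⟩
    exact hD x
  have hcard : Nat.card D.ker * Nat.card D.range = q ^ 2 := by
    rw [← AddSubgroup.index_ker, AddSubgroup.card_mul_index, hF]
  refine dvd_of_isPrimePow_of_dvd_pow_of_le hq (Dvd.intro _ hcard) ?_
  have := hq.pos
  by_contra! hlt
  nlinarith

theorem dvd_card_frobenius_fixed_add {q : ℕ} (hq : IsPrimePow q) (hF : Nat.card F = q ^ 2)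
    {σ : F →+* F} (hσ : ∀ x, σ x = x ^ q) (c : F) (g : F →+ F) :
    q ∣ Nat.card {l | σ (c + g l) = c + g l} := by
  set D := (σ.toAddMonoidHom - AddMonoidHom.id F).comp g
  refine dvd_card_of_forall_dvd_card_fiber D.ker.subtype Subtype.val_injective fun l => ?_
  have hiff (u : D.ker) :
      (l + D.ker.subtype u ∈ {l | σ (c + g l) = c + g l}) ↔ σ (c + g l) = c + g l := by
    have hu : σ (g u) = g u := sub_eq_zero.1 u.2
    simp [hu, ← add_assoc]
  by_cases hl : σ (c + g l) = c + g l
  · exact (dvd_card_ker_frobenius_sub_id_comp hq hF hσ g).trans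
      (dvd_of_eq (Nat.card_congr (Equiv.subtypeUnivEquiv fun u => (hiff u).2 hl).symm))
  · exact (dvd_zero q).trans
      (dvd_of_eq (Nat.card_eq_zero.2 (.inl ⟨fun u => hl ((hiff u.1).1 u.2)⟩)).symm)

end Counting

section Quadric

variable {F V U : Type*} [Field F] [AddCommGroup V] [Module F V] [AddCommGroup U] [Module F U]

/- On a coset `v + ⟨w, z⟩` the equation `Q = 0` is affine in the `w`-coordinate, with a slope
`polar Q v w` that is constant on the coset. -/
theorem card_dvd_card_quadric_inter_fiber [Finite F] [Finite V] (Q : QuadraticForm F V) {w z : V}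
    (hwz : LinearIndependent F ![w, z]) (hw : Q w = 0) (hpolar : QuadraticMap.polar Q w z = 0)
    (L : V →ₗ[F] U) (hLw : L w = 0) (hLz : L z = 0) (u : U) :
    Nat.card F ∣ Nat.card {v | L v = u ∧ Q v = 0} := by
  set j : F × F →ₗ[F] V :=
    (LinearMap.toSpanSingleton F V w).coprod (LinearMap.toSpanSingleton F V z)
  have hj : Function.Injective j := by
    refine (injective_iff_map_eq_zero j).2 fun x hx => ?_
    exact Prod.ext_iff.2 (LinearIndependent.pair_iff.1 hwz x.1 x.2 hx)
  refine dvd_card_of_forall_dvd_card_fiber j.toAddMonoidHom hj fun v => ?_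
  have hL (x : F × F) : L (v + j x) = L v := by simp [j, hLw, hLz]
  have hQ (x : F × F) : Q (v + j x) =
      (Q v + x.2 * x.2 * Q z + x.2 * QuadraticMap.polar Q v z)
        + x.1 * QuadraticMap.polar Q v w := by
    simp only [j, LinearMap.coprod_apply, LinearMap.toSpanSingleton_apply,
      QuadraticMap.map_add Q, QuadraticMap.map_smul, QuadraticMap.polar_add_right,
      QuadraticMap.polar_smul_left, QuadraticMap.polar_smul_right, hw, hpolar, smul_eq_mul]
    ring
  by_cases hv : L v = u
  · simpa [hL, hQ, hv] using card_dvd_card_add_mul_eq_zero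
      (fun b => Q v + b * b * Q z + b * QuadraticMap.polar Q v z) (QuadraticMap.polar Q v w)
  · simp [hL, hv]

theorem exists_linearIndependent_pair_mem_ker [FiniteDimensional F V] [FiniteDimensional F U]
    (L : V →ₗ[F] U) (hVU : Module.finrank F U + 1 < Module.finrank F V) {w : V} (hw : w ≠ 0)
    (hLw : L w = 0) : ∃ z, L z = 0 ∧ LinearIndependent F ![w, z] := by
  have hker : 1 < Module.finrank F L.ker := by
    have := L.finrank_range_add_finrank_ker
    have := Submodule.finrank_le L.range
    omega
  obtain ⟨z, hz⟩ := exists_linearIndependent_pair_of_one_lt_finrank hker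
    (x := ⟨w, hLw⟩) (by simpa [Subtype.ext_iff] using hw)
  refine ⟨z, z.2, ?_⟩
  simpa [LinearIndependent.pair_iff, Subtype.ext_iff] using hz

end Quadric

theorem card_sub_card_inter_hyperplane {K V : Type*} [Field K] [AddCommGroup V] [Module K V]
    [Finite (Projectivization K V)] {C : V → Prop} (hC : ∀ (c : K) v, c ≠ 0 → (C (c • v) ↔ C v))
    (f : Module.Dual K V) :
    Nat.card {P : Projectivization K V | C P.rep}
        - Nat.card ↥({P : Projectivization K V | C P.rep} ∩ {P | f P.rep = 0}) =
      Nat.card {v | f v = 1 ∧ C v} := by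
  simp only [Nat.card_coe_set_eq]
  rw [← Set.ncard_inter_add_ncard_sdiff_eq_ncard {P : Projectivization K V | C P.rep}
    {P | f P.rep = 0} (Set.toFinite _), Nat.add_sub_cancel_left]
  symm
  have hne (v : V) (hv : f v = 1) : v ≠ 0 := by
    rintro rfl
    simp at hv
  refine Set.ncard_congr (fun v hv => Projectivization.mk K v (hne v hv.1)) ?_ ?_ ?_
  · rintro v ⟨hfv, hv⟩
    obtain ⟨a, ha⟩ := Projectivization.exists_smul_eq_mk_rep K v (hne v hfv)
    simp only [Set.mem_sdiff, Set.mem_ofPred_eq, ← ha, Units.smul_def, hC _ _ a.ne_zero]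
    exact ⟨hv, by simp [hfv]⟩
  · intro v v' hv hv' h
    obtain ⟨a, rfl⟩ := (Projectivization.mk_eq_mk_iff' K _ _ _ _).1 h
    have ha : a = 1 := by simpa [hv'.1] using hv.1
    rw [ha, one_smul]
  · rintro P ⟨hP, hfP⟩
    have hfP : f P.rep ≠ 0 := hfP
    refine ⟨(f P.rep)⁻¹ • P.rep, ⟨by simp [hfP], (hC _ _ (inv_ne_zero hfP)).2 hP⟩, ?_⟩
    conv_rhs => rw [← P.mk_rep]
    exact (Projectivization.mk_eq_mk_iff' K _ _ _ _).2 ⟨_, rfl⟩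

section Forms

/-- The quadratic form `∑ i ∈ s, x i ^ 2`, which cuts out the points at infinity of `Bset`. -/
def sumSq (F : Type*) {ι : Type*} [Field F] (s : Finset ι) : QuadraticForm F (ι → F) :=
  ∑ i ∈ s, QuadraticMap.proj i i

variable {F ι : Type*} [Field F]

theorem sumSq_apply (s : Finset ι) (x : ι → F) : sumSq F s x = ∑ i ∈ s, x i ^ 2 := by
  simp [sumSq, sq]

/-- The `σ`-Hermitian form `∑ i ∈ s, σ (x i) * x i`; for `σ` the `q`-th power map its summands are
`x i ^ (q + 1)`. -/
def hermSum (σ : F →+* F) (s : Finset ι) (x : ι → F) : F := ∑ i ∈ s, σ (x i) * x i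

theorem map_hermSum {σ : F →+* F} (hσ : Function.Involutive σ) (s : Finset ι) (x : ι → F) :
    σ (hermSum σ s x) = hermSum σ s x := by
  simp [hermSum, hσ _, mul_comm]

theorem hermSum_add_smul {σ : F →+* F} {s : Finset ι} {w : ι → F} (hw : ∀ i ∈ s, σ (w i) = w i)
    (x : ι → F) (l : F) :
    hermSum σ s (x + l • w) = hermSum σ s x
      + (l * σ (∑ i ∈ s, x i * w i) + σ l * ∑ i ∈ s, x i * w i) + σ l * l * sumSq F s w := by
  simp only [hermSum, sumSq_apply, map_sum, Finset.mul_sum, ← Finset.sum_add_distrib]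
  refine Finset.sum_congr rfl fun i hi => ?_
  simp only [Pi.add_apply, Pi.smul_apply, smul_eq_mul, map_add, map_mul, hw i hi]
  ring

theorem exists_natCast_isotropic (p : ℕ) [NeZero p] [CharP F p] {s : Finset ι} (hs : 2 < s.card) :
    ∃ n : ι → ℕ, (∀ i ∉ s, n i = 0) ∧ (∃ i ∈ s, (n i : F) ≠ 0) ∧
      sumSq F s (fun i => (n i : F)) = 0 := by
  classical
  obtain ⟨i, hi, j, hj, k, hk, hij, hik, hjk⟩ := Finset.two_lt_card.1 hs
  obtain ⟨a, b, hab⟩ := CharP.sq_add_sq F p (-1)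
  set n : ι → ℕ := Pi.single i a + Pi.single j b + Pi.single k 1
  have hni : n i = a := by simp [n, hij, hik]
  have hnj : n j = b := by simp [n, hij.symm, hjk]
  have hnk : n k = 1 := by simp [n, hik.symm, hjk.symm]
  have hn (l : ι) (hl : l ∉ ({i, j, k} : Finset ι)) : n l = 0 := by
    simp only [Finset.mem_insert, Finset.mem_singleton, not_or] at hl
    simp [n, hl]
  have hsub : ({i, j, k} : Finset ι) ⊆ s := by simp [Finset.insert_subset_iff, hi, hj, hk]
  refine ⟨n, fun l hl => hn l fun h => hl (hsub h), ⟨k, hk, by simp [hnk]⟩, ?_⟩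
  rw [sumSq_apply, ← Finset.sum_subset hsub fun l _ hl => by simp [hn l hl],
    Finset.sum_insert (by simp [hij, hik]), Finset.sum_pair hjk, hni, hnj, hnk]
  push_cast at hab ⊢
  linear_combination hab

end Forms

section Hypersurface

variable {F : Type*} [Field F] {r : ℕ}

/-- The indices `1, …, r - 1` of the coordinates occurring quadratically in `affEq`. -/
abbrev mid (r : ℕ) : Finset (Fin (r + 1)) := Finset.Ioo 0 (Fin.last r)

theorem sum_ite_eq_sum_mid (g : Fin (r + 1) → F) :
    (∑ i : Fin (r + 1), if 1 ≤ i.1 ∧ i.1 < r then g i else 0) = ∑ i ∈ mid r, g i := by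
  rw [← Finset.sum_filter]
  congr 1
  ext i
  simp [Fin.lt_def, Nat.one_le_iff_ne_zero, Nat.pos_iff_ne_zero]

/-- The expression `x_r + α ∑ x_i² - β ∑ x_i σ(x_i)`, for which `affEq` says that it is fixed by the
`q`-th power map `σ`. -/
def affHeight (σ : F →+* F) (α β : F) (x : Fin (r + 1) → F) : F :=
  x (Fin.last r) + α * sumSq F (mid r) x - β * hermSum σ (mid r) x

theorem affEq_iff_map_affHeight_eq {q : ℕ} {σ : F →+* F} (hσ : ∀ x, σ x = x ^ q)
    (hinv : Function.Involutive σ) {α β : F} {x : Fin (r + 1) → F} :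
    affEq q r α β x ↔ σ (affHeight σ α β x) = affHeight σ α β x := by
  have hsq : (∑ i ∈ mid r, x i ^ (2 * q)) = σ (sumSq F (mid r) x) := by
    rw [sumSq_apply, map_sum]
    simp only [hσ, pow_mul]
  have hherm : (∑ i ∈ mid r, x i ^ (q + 1)) = hermSum σ (mid r) x := by
    simp only [hermSum, hσ, pow_succ]
  simp only [affEq, sum_ite_eq_sum_mid, hsq, hherm, ← sumSq_apply, ← hσ, affHeight, map_sub,
    map_add, map_mul, map_hermSum hinv]
  constructor <;> intro h <;> linear_combination h

theorem exists_affHeight_add_smul (σ : F →+* F) (α β : F) {w : Fin (r + 1) → F}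
    (hσw : ∀ i ∈ mid r, σ (w i) = w i) (hw : sumSq F (mid r) w = 0) (x : Fin (r + 1) → F) :
    ∃ g : F →+ F, ∀ l, affHeight σ α β (x + l • w) = affHeight σ α β x + g l := by
  set d := ∑ i ∈ mid r, x i * w i
  set m := QuadraticMap.polar (sumSq F (mid r)) x w
  refine ⟨AddMonoidHom.mk'
    (fun l => l * w (Fin.last r) + α * (l * m) - β * (l * σ d + σ l * d)) fun a b => ?_,
    fun l => ?_⟩
  · rw [map_add]
    ring
  · simp only [affHeight, hermSum_add_smul hσw,
      QuadraticMap.map_add (sumSq F (mid r)), QuadraticMap.map_smul,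
      QuadraticMap.polar_smul_right, hw, Pi.add_apply, Pi.smul_apply, smul_eq_mul,
      AddMonoidHom.mk'_apply, d, m]
    ring

/-- The condition defining `Bset`, read as a condition on arbitrary vectors of homogeneous
coordinates rather than on chosen representatives. -/
def OnHypersurface (q r : ℕ) (α β : F) (v : Fin (r + 1) → F) : Prop :=
  (v 0 ≠ 0 ∧ affEq q r α β fun i => v i / v 0) ∨
    (v 0 = 0 ∧ (∑ i : Fin (r + 1), if 1 ≤ i.1 ∧ i.1 < r then v i ^ 2 else 0) = 0)

theorem onHypersurface_smul (q : ℕ) (α β c : F) (v : Fin (r + 1) → F) (hc : c ≠ 0) :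
    OnHypersurface q r α β (c • v) ↔ OnHypersurface q r α β v := by
  simp [OnHypersurface, sum_ite_eq_sum_mid, mul_div_mul_left _ _ hc, mul_pow, ← Finset.mul_sum, hc]

/- The last basis vector is itself isotropic; if `f` does not kill it, it serves to move any
isotropic vector into the hyperplane `f = 0` without changing the middle coordinates. -/
theorem exists_isotropic_mem_ker (p : ℕ) [NeZero p] [CharP F p] (hr : 3 < r)
    (f : Module.Dual F (Fin (r + 1) → F)) :
    ∃ w ≠ 0, w 0 = 0 ∧ f w = 0 ∧ sumSq F (mid r) w = 0 ∧ ∀ i ∈ mid r, ∃ n : ℕ, w i = n := by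
  set E : Fin (r + 1) → F := Pi.single (Fin.last r) 1
  have hE0 : E 0 = 0 := by
    refine Pi.single_eq_of_ne ?_ _
    rw [Ne, Fin.ext_iff, Fin.val_zero, Fin.val_last]
    omega
  have hEmid (i) (hi : i ∈ mid r) : E i = 0 := by simp [E, (Finset.mem_Ioo.1 hi).2.ne]
  by_cases hf : f E = 0
  · refine ⟨E, by simp [E], hE0, hf, ?_, fun i hi => ⟨0, by simp [hEmid i hi]⟩⟩
    rw [sumSq_apply]
    exact Finset.sum_eq_zero fun i hi => by simp [hEmid i hi]
  · obtain ⟨n, hn0, ⟨k, hk, hnk⟩, hn⟩ :=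
      exists_natCast_isotropic (F := F) p (s := mid r) (by simp; omega)
    set w₀ : Fin (r + 1) → F := fun i => n i
    set w := w₀ - (f w₀ / f E) • E
    have hwmid (i) (hi : i ∈ mid r) : w i = n i := by simp [w, w₀, hEmid i hi]
    refine ⟨w, fun h => hnk ?_, ?_, ?_, ?_, fun i hi => ⟨n i, hwmid i hi⟩⟩
    · rw [← hwmid k hk, h, Pi.zero_apply]
    · simp [w, w₀, hE0, hn0 0]
    · simp [w, hf]
    · rw [← hn, sumSq_apply, sumSq_apply]
      exact Finset.sum_congr rfl fun i hi => by rw [hwmid i hi]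

variable [Finite F]

theorem dvd_card_affine_points {q : ℕ} (hq : IsPrimePow q) (hF : Nat.card F = q ^ 2)
    {σ : F →+* F} (hσ : ∀ x, σ x = x ^ q) (α β : F) (f : Module.Dual F (Fin (r + 1) → F))
    {w : Fin (r + 1) → F} (hw0 : w 0 = 0) (hfw : f w = 0) (hw : sumSq F (mid r) w = 0)
    (hσw : ∀ i ∈ mid r, σ (w i) = w i) (hwne : w ≠ 0) :
    q ∣ Nat.card {v | f v = 1 ∧ v 0 ≠ 0 ∧ affEq q r α β fun i => v i / v 0} := by
  refine dvd_card_of_forall_dvd_card_fiber (LinearMap.toSpanSingleton F _ w).toAddMonoidHom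
    (smul_left_injective F hwne) fun v => ?_
  obtain ⟨g, hg⟩ := exists_affHeight_add_smul σ α β hσw hw fun i => v i / v 0
  have hdiv (l : F) :
      (fun i => (v i + l * w i) / v 0) = (fun i => v i / v 0) + (l * (v 0)⁻¹) • w := by
    ext i
    simp only [Pi.add_apply, Pi.smul_apply, smul_eq_mul]
    ring
  have hiff (x : Fin (r + 1) → F) :=
    affEq_iff_map_affHeight_eq (α := α) (β := β) (x := x) hσ
      (frobenius_involutive_of_card_eq_sq hF hσ)
  by_cases hv : f v = 1 ∧ v 0 ≠ 0
  · simpa [hw0, hfw, hv, hdiv, hiff, hg] using dvd_card_frobenius_fixed_add hq hF hσ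
      (affHeight σ α β fun i => v i / v 0) (g.comp (AddMonoidHom.mulRight (v 0)⁻¹))
  · simp [hw0, hfw, ← and_assoc, hv]

theorem card_dvd_card_points_at_infinity (hr : 3 < r) (f : Module.Dual F (Fin (r + 1) → F))
    {w : Fin (r + 1) → F} (hw0 : w 0 = 0) (hfw : f w = 0) (hw : sumSq F (mid r) w = 0)
    (hwne : w ≠ 0) :
    Nat.card F ∣ Nat.card {v | f v = 1 ∧ v 0 = 0 ∧ sumSq F (mid r) v = 0} := by
  set L : (Fin (r + 1) → F) →ₗ[F] F × F := f.prod (LinearMap.proj 0)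
  set M := L.prod ((sumSq F (mid r)).polarBilin w)
  obtain ⟨z, hMz, hwz⟩ := exists_linearIndependent_pair_mem_ker M
    (by simp; omega) hwne (by simp [M, L, hw0, hfw, hw])
  obtain ⟨hLz, hpolar⟩ := Prod.ext_iff.1 hMz
  simpa [L, and_assoc] using card_dvd_card_quadric_inter_fiber (sumSq F (mid r)) hwz hw hpolar L
    (by simp [L, hw0, hfw]) hLz (1, 0)

theorem exists_charP_frobenius {q : ℕ} (hq : IsPrimePow q) (hF : Nat.card F = q ^ 2) :
    ∃ p, ∃ _ : CharP F p, p ≠ 0 ∧ ∃ σ : F →+* F, ∀ x, σ x = x ^ q := by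
  have := Fintype.ofFinite F
  obtain ⟨p, n, hp, -, rfl⟩ := hq
  have : Fact p.Prime := ⟨hp.nat_prime⟩
  have hchar : CharP F p := charP_of_card_eq_prime_pow (f := n * 2) <| by
    rw [← Nat.card_eq_fintype_card, hF, pow_mul]
  exact ⟨p, hchar, hp.ne_zero, iterateFrobenius F p n, iterateFrobenius_def p n⟩

theorem dvd_card_onHypersurface {q : ℕ} (hq : IsPrimePow q) (hF : Nat.card F = q ^ 2) (hr : 3 < r)
    (α β : F) (f : Module.Dual F (Fin (r + 1) → F)) :
    q ∣ Nat.card {v | f v = 1 ∧ OnHypersurface q r α β v} := by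
  obtain ⟨p, _, hp, σ, hσ⟩ := exists_charP_frobenius hq hF
  have : NeZero p := ⟨hp⟩
  obtain ⟨w, hwne, hw0, hfw, hw, hwnat⟩ := exists_isotropic_mem_ker p hr f
  have hσw (i) (hi : i ∈ mid r) : σ (w i) = w i := by
    obtain ⟨n, hn⟩ := hwnat i hi
    rw [hn, map_natCast]
  have haff := dvd_card_affine_points hq hF hσ α β f hw0 hfw hw hσw hwne
  have hinf : q ∣ Nat.card {v | f v = 1 ∧ v 0 = 0 ∧ sumSq F (mid r) v = 0} :=
    (hF ▸ dvd_pow_self q two_ne_zero).trans (card_dvd_card_points_at_infinity hr f hw0 hfw hw hwne)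
  have hsplit : {v | f v = 1 ∧ OnHypersurface q r α β v} =
      {v | f v = 1 ∧ v 0 ≠ 0 ∧ affEq q r α β fun i => v i / v 0} ∪
        {v | f v = 1 ∧ v 0 = 0 ∧ sumSq F (mid r) v = 0} := by
    ext v
    simp only [OnHypersurface, sum_ite_eq_sum_mid, sumSq_apply, Set.mem_union, Set.mem_ofPred_eq]
    tauto
  rw [Nat.card_coe_set_eq] at haff hinf ⊢
  rw [hsplit, Set.ncard_union_eq (Set.disjoint_left.2 fun v hv hv' => hv.2.1 hv'.2.1)]
  exact dvd_add haff hinf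

end Hypersurface

theorem statement8_general (q r : ℕ) (hq : IsPrimePow q) (hr : 3 < r) (F : Type*) [Field F]
    [Finite F] (hF : Nat.card F = q ^ 2) (α β : F) (f : Module.Dual F (Fin (r + 1) → F)) :
    q ∣ Nat.card ↥(Bset F q r α β) - Nat.card ↥(Bset F q r α β ∩ {P | f P.rep = 0}) := by
  have hweight := card_sub_card_inter_hyperplane (onHypersurface_smul q α β) f
  exact hweight ▸ dvd_card_onHypersurface hq hF hr α β f

/-- for `q` odd and `r > 3`, the projective code `C(B)` is
`q`-divisible: for every hyperplane `Σ` of `PG(r,q²)`, `q` divides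
`|B| − |B ∩ Σ|` (equivalently, every weight of `C(B)` is divisible by `q`). -/
theorem statement8 (q r : ℕ) (hq : IsPrimePow q) (hqodd : Odd q) (hr : 3 < r)
    (F : Type) [Field F] [Fintype F] (hF : Fintype.card F = q ^ 2)
    (α β : F) (hα : α ≠ 0) (hβ : β ^ q ≠ β)
    (hcond : (Odd r ∧ 4 * α ^ (q + 1) + (β ^ q - β) ^ 2 ≠ 0) ∨
      (Even r ∧ ∀ t : F, t ^ q = t → t ^ 2 ≠ 4 * α ^ (q + 1) + (β ^ q - β) ^ 2)) :
    ∀ f : Module.Dual F (Fin (r + 1) → F), f ≠ 0 →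
      q ∣ Nat.card ↥(Bset F q r α β) - Nat.card ↥(Bset F q r α β ∩ {P | f P.rep = 0}) := by
  intro f _
  exact statement8_general q r hq hr F (Nat.card_eq_fintype_card.trans hF) α β f
end
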